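/- arXiv:1001.1032 — 2 statements merged into one kernel-verified Lean document; each statement's English description precedes it below -/
import Mathlib

section
/- Let d ∈ {2,3}, T ∈ (0,∞], L > 0, Γ > 0, ν > 0, a, b ∈ ℝ and c > 0, and let p ≥ 1 be an integer. Let Q : [0,T)×ℝ^d → S₀, u : [0,T)×ℝ^d → ℝ^d and P : [0,T)×ℝ^d → ℝ be smooth, with x ↦ Q(t,x), x ↦ u(t,x), x ↦ P(t,x) compactly supported uniformly on compact subintervals of [0,T), satisfying the coupled system pointwise. Then there exists a constant C, depending only on a, b, c, p and Γ, such that for all t ∈ [0,T): ∫_{ℝ^d} (tr(Q²(t,x)))^p dx ≤ e^{Ct} ∫_{ℝ^d} (tr(Q²(0,x)))^p dx. In particular ‖Q(t,·)‖_{L^{2p}} ≤ e^{Ct/(2p)} ‖Q(0,·)‖_{L^{2p}}. -/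
open MeasureTheory ENNReal

/-- time derivative of a function on `ℝ × ℝ^d`. -/
noncomputable def pt {d : ℕ} (f : ℝ × (Fin d → ℝ) → ℝ) (p : ℝ × (Fin d → ℝ)) : ℝ :=
  fderiv ℝ f p (1, 0)

/-- spatial partial derivative in the `γ`-th coordinate direction. -/
noncomputable def px {d : ℕ} (γ : Fin d) (f : ℝ × (Fin d → ℝ) → ℝ) (p : ℝ × (Fin d → ℝ)) : ℝ :=
  fderiv ℝ f p (0, Pi.single γ 1)

/-- spatial Laplacian. -/
noncomputable def lap {d : ℕ} (f : ℝ × (Fin d → ℝ) → ℝ) (p : ℝ × (Fin d → ℝ)) : ℝ :=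
  ∑ γ, px γ (px γ f) p

/-- Kronecker delta. -/
def kron {n : ℕ} (α β : Fin n) : ℝ := if α = β then 1 else 0

/-- embedding of `Fin d` into `Fin 3` (the inclusion when `d ≤ 3`). -/
def e3 {d : ℕ} (i : Fin d) : Fin 3 := ⟨i.val % 3, Nat.mod_lt _ (by norm_num)⟩

/-- vorticity tensor `Ω_{αβ} = (1/2)(∂_β u_α − ∂_α u_β)`, extended by zero to a 3×3 matrix. -/
noncomputable def vort3 {d : ℕ} (u : ℝ × (Fin d → ℝ) → Fin d → ℝ) (p : ℝ × (Fin d → ℝ))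
    (α β : Fin 3) : ℝ :=
  if hα : (α : ℕ) < d then
    if hβ : (β : ℕ) < d then
      (1 / 2) * (px ⟨β, hβ⟩ (fun q => u q ⟨α, hα⟩) p - px ⟨α, hα⟩ (fun q => u q ⟨β, hβ⟩) p)
    else 0
  else 0

/-- `tr(Q²)`. -/
noncomputable def trQ2 {d : ℕ} (Q : ℝ × (Fin d → ℝ) → Fin 3 → Fin 3 → ℝ)
    (p : ℝ × (Fin d → ℝ)) : ℝ :=
  ∑ α, ∑ β, Q p α β * Q p β α

/-- `tr(Q³)`. -/
noncomputable def trQ3 {d : ℕ} (Q : ℝ × (Fin d → ℝ) → Fin 3 → Fin 3 → ℝ)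
    (p : ℝ × (Fin d → ℝ)) : ℝ :=
  ∑ α, ∑ β, ∑ γ, Q p α β * Q p β γ * Q p γ α

/-- `|∇Q|² = Σ_{α,β,γ} (∂_γ Q_{αβ})²`. -/
noncomputable def gradQsq {d : ℕ} (Q : ℝ × (Fin d → ℝ) → Fin 3 → Fin 3 → ℝ)
    (p : ℝ × (Fin d → ℝ)) : ℝ :=
  ∑ γ : Fin d, ∑ α : Fin 3, ∑ β : Fin 3, (px γ (fun q => Q q α β) p) ^ 2

/-- the molecular field `H = LΔQ − aQ + b(Q² − (tr(Q²)/3)Id) − c·tr(Q²)·Q`. -/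
noncomputable def molH {d : ℕ} (L a b c : ℝ) (Q : ℝ × (Fin d → ℝ) → Fin 3 → Fin 3 → ℝ)
    (p : ℝ × (Fin d → ℝ)) (α β : Fin 3) : ℝ :=
  L * lap (fun q => Q q α β) p - a * Q p α β
    + b * ((∑ γ, Q p α γ * Q p γ β) - kron α β / 3 * trQ2 Q p)
    - c * Q p α β * trQ2 Q p

/-- the order-parameter equation of the Beris–Edwards system (with `ξ = 0`). -/
noncomputable def QTensorEq {d : ℕ} (L Γ a b c : ℝ)
    (Q : ℝ × (Fin d → ℝ) → Fin 3 → Fin 3 → ℝ) (u : ℝ × (Fin d → ℝ) → Fin d → ℝ)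
    (p : ℝ × (Fin d → ℝ)) : Prop :=
  ∀ α β : Fin 3,
    pt (fun q => Q q α β) p + (∑ γ : Fin d, u p γ * px γ (fun q => Q q α β) p)
      - (∑ γ : Fin 3, (vort3 u p α γ * Q p γ β - Q p α γ * vort3 u p γ β))
    = Γ * molH L a b c Q p α β

/-- the forced Navier–Stokes (momentum) equation of the Beris–Edwards system. -/
noncomputable def MomentumEq {d : ℕ} (L ν : ℝ)
    (Q : ℝ × (Fin d → ℝ) → Fin 3 → Fin 3 → ℝ) (u : ℝ × (Fin d → ℝ) → Fin d → ℝ)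
    (P : ℝ × (Fin d → ℝ) → ℝ) (p : ℝ × (Fin d → ℝ)) : Prop :=
  ∀ α : Fin d,
    pt (fun q => u q α) p + (∑ β : Fin d, u p β * px β (fun q => u q α) p)
    = ν * lap (fun q => u q α) p + px α P p
      - L * (∑ β : Fin d, px β (fun q =>
          (∑ ζ : Fin 3, ∑ δ : Fin 3,
            px α (fun r => Q r ζ δ) q * px β (fun r => Q r ζ δ) q)
          - kron α β / (d : ℝ) * gradQsq Q q) p)
      + L * (∑ β : Fin d, px β (fun q =>
          ∑ γ : Fin 3, (Q q (e3 α) γ * lap (fun r => Q r γ (e3 β)) q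
            - lap (fun r => Q r (e3 α) γ) q * Q q γ (e3 β))) p)

/-- incompressibility. -/
noncomputable def DivFree {d : ℕ} (u : ℝ × (Fin d → ℝ) → Fin d → ℝ)
    (p : ℝ × (Fin d → ℝ)) : Prop :=
  ∑ γ : Fin d, px γ (fun q => u q γ) p = 0

/-!
Pairing the equation for `Q` with `2Q` gives a scalar inequality for `φ = tr Q²`. The vorticity
term drops out because it is a commutator with `Q`, and `2 tr(Q ΔQ) = Δφ - 2|∇Q|² ≤ Δφ`. In the
bulk term, Young's inequality bounds `b tr(Q Y)`, where `Y` is the traceless part of `Q²`, by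
`c tr(Y²) + b²/(4c) φ`, and `tr(Y²) ≤ tr(Q⁴) ≤ φ²` is absorbed by the quartic term `-cφ²`. Hence
`∂ₜφ + u·∇φ ≤ ΓLΔφ + 2Γ(b²/(4c) - a)φ`. Since `s ↦ s^p` is nondecreasing and convex on `[0, ∞)`,
`φ^p` satisfies the same inequality with the growth rate multiplied by `p`. As `u` is divergence
free, the transport and diffusion terms integrate to zero, and Grönwall's inequality concludes.
-/

section Matrix

variable {n : Type*} [Fintype n]

lemma isSymm_mul_self_of_isSymm {A : Matrix n n ℝ} (hA : A.IsSymm) : (A * A).IsSymm := by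
  simpa only [hA.eq] using Matrix.isSymm_mul_transpose_self A

section Frobenius

attribute [local instance] Matrix.frobeniusNormedAddCommGroup

lemma frobenius_norm_sq_of_isSymm {A : Matrix n n ℝ} (hA : A.IsSymm) :
    ‖A‖ ^ 2 = (A * A).trace := by
  rw [Matrix.frobenius_norm_def, ← Real.sqrt_eq_rpow, Real.sq_sqrt (by positivity)]
  simp only [Matrix.trace, Matrix.diag_apply, Matrix.mul_apply, Real.rpow_two, Real.norm_eq_abs,
    sq_abs]
  exact Finset.sum_congr rfl fun i _ => Finset.sum_congr rfl fun j _ => by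
    rw [hA.apply i j, pow_two]

lemma trace_mul_self_nonneg_of_isSymm {A : Matrix n n ℝ} (hA : A.IsSymm) :
    0 ≤ (A * A).trace :=
  frobenius_norm_sq_of_isSymm hA ▸ sq_nonneg _

lemma trace_sq_mul_sq_le_of_isSymm {A : Matrix n n ℝ} (hA : A.IsSymm) :
    (A * A * (A * A)).trace ≤ (A * A).trace ^ 2 := by
  rw [← frobenius_norm_sq_of_isSymm (isSymm_mul_self_of_isSymm hA),
    ← frobenius_norm_sq_of_isSymm hA, pow_two (‖A‖)]
  gcongr
  exact Matrix.frobenius_norm_mul A A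

end Frobenius

lemma trace_mul_commutator_eq_zero {R : Type*} [CommRing R] (A B : Matrix n n R) :
    (A * (B * A - A * B)).trace = 0 := by
  rw [mul_sub, Matrix.trace_sub, ← mul_assoc, Matrix.trace_mul_comm, sub_self]

lemma mul_trace_mul_le_of_isSymm {A B : Matrix n n ℝ} (hA : A.IsSymm) (hB : B.IsSymm)
    (b : ℝ) {c : ℝ} (hc : 0 < c) :
    b * (A * B).trace ≤ c * (B * B).trace + b ^ 2 / (4 * c) * (A * A).trace := by
  have hsq : 0 ≤ (((2 * c) • B - b • A) * ((2 * c) • B - b • A)).trace :=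
    trace_mul_self_nonneg_of_isSymm ((hB.smul _).sub (hA.smul _))
  have hexpand : (((2 * c) • B - b • A) * ((2 * c) • B - b • A)).trace =
      4 * c * (c * (B * B).trace + b ^ 2 / (4 * c) * (A * A).trace - b * (A * B).trace) := by
    simp only [sub_mul, mul_sub, Matrix.smul_mul, Matrix.mul_smul, Matrix.trace_sub,
      Matrix.trace_smul, smul_eq_mul, Matrix.trace_mul_comm B A]
    field_simp
    ring
  rw [hexpand] at hsq
  exact sub_nonneg.mp (nonneg_of_mul_nonneg_right hsq (by positivity))

variable [DecidableEq n]

/-- The traceless part `A − (tr A / n) I` of a square matrix of size `n`. -/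
noncomputable def tracelessPart (A : Matrix n n ℝ) : Matrix n n ℝ :=
  A - (A.trace / Fintype.card n) • 1

lemma isSymm_tracelessPart {A : Matrix n n ℝ} (hA : A.IsSymm) : (tracelessPart A).IsSymm :=
  hA.sub (Matrix.isSymm_one.smul _)

lemma trace_tracelessPart_mul_self_le (A : Matrix n n ℝ) :
    (tracelessPart A * tracelessPart A).trace ≤ (A * A).trace := by
  have hexpand : (tracelessPart A * tracelessPart A).trace =
      (A * A).trace - A.trace ^ 2 / Fintype.card n := by
    simp only [tracelessPart, sub_mul, mul_sub, Matrix.smul_mul, Matrix.mul_smul, mul_one, one_mul,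
      Matrix.trace_sub, Matrix.trace_smul, Matrix.trace_one, smul_eq_mul]
    rcases eq_or_ne (Fintype.card n : ℝ) 0 with hn | hn
    · simp [hn]
    · field_simp
      ring
  rw [hexpand]
  exact sub_le_self _ (by positivity)

lemma trace_mul_tracelessPart_sq_le {A : Matrix n n ℝ} (hA : A.IsSymm) (b : ℝ) {c : ℝ}
    (hc : 0 < c) :
    b * (A * tracelessPart (A * A)).trace ≤
      c * (A * A).trace ^ 2 + b ^ 2 / (4 * c) * (A * A).trace := by
  have hsymm := isSymm_tracelessPart (isSymm_mul_self_of_isSymm hA)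
  refine (mul_trace_mul_le_of_isSymm hA hsymm b hc).trans ?_
  gcongr
  exact (trace_tracelessPart_mul_self_le _).trans (trace_sq_mul_sq_le_of_isSymm hA)

end Matrix

section Derivatives

variable {d : ℕ} {f : ℝ × (Fin d → ℝ) → ℝ} {m n : WithTop ℕ∞}

lemma contDiff_pt (hf : ContDiff ℝ n f) (hmn : m + 1 ≤ n) : ContDiff ℝ m (pt f) :=
  (hf.fderiv_right hmn).clm_apply contDiff_const

lemma contDiff_px (γ : Fin d) (hf : ContDiff ℝ n f) (hmn : m + 1 ≤ n) : ContDiff ℝ m (px γ f) :=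
  (hf.fderiv_right hmn).clm_apply contDiff_const

lemma hasDerivAt_pt {t : ℝ} {x : Fin d → ℝ} (hf : DifferentiableAt ℝ f (t, x)) :
    HasDerivAt (fun s => f (s, x)) (pt f (t, x)) t :=
  hf.hasFDerivAt.comp_hasDerivAt t
    ((hasDerivAt_id t).prodMk (hasDerivAt_const t x))

lemma px_eq_fderiv_slice {t : ℝ} {x : Fin d → ℝ} (hf : DifferentiableAt ℝ f (t, x)) (γ : Fin d) :
    px γ f (t, x) = fderiv ℝ (fun y => f (t, y)) x (Pi.single γ 1) := by
  have hslice := hf.hasFDerivAt.comp x (hasFDerivAt_prodMk_right t x)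
  rw [Function.comp_def] at hslice
  simp [px, hslice.fderiv]

lemma px_eq_zero_of_notMem {t : ℝ} {x : Fin d → ℝ} (hf : DifferentiableAt ℝ f (t, x))
    {K : Set (Fin d → ℝ)} (hK : IsClosed K) (hfK : ∀ y ∉ K, f (t, y) = 0) (γ : Fin d) (hx : x ∉ K) :
    px γ f (t, x) = 0 := by
  have hzero : (fun y => f (t, y)) =ᶠ[nhds x] fun _ => 0 := by
    filter_upwards [hK.isOpen_compl.mem_nhds hx] with y hy using hfK y hy
  rw [px_eq_fderiv_slice hf, hzero.fderiv_eq, fderiv_fun_const, Pi.zero_apply, zero_apply]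

variable {E ι : Type*} [NormedAddCommGroup E] [NormedSpace ℝ E] {x : E}

lemma fderiv_fun_const_mul_apply (c : ℝ) (f : E → ℝ) (x v : E) :
    fderiv ℝ (fun y => c * f y) x v = c * fderiv ℝ f x v :=
  DFunLike.congr_fun (congrFun (fderiv_const_smul_field (f := f) c) x) v

lemma fderiv_fun_mul_apply {f g : E → ℝ} (hf : DifferentiableAt ℝ f x)
    (hg : DifferentiableAt ℝ g x) (v : E) :
    fderiv ℝ (fun y => f y * g y) x v = fderiv ℝ f x v * g x + f x * fderiv ℝ g x v := by
  rw [fderiv_fun_mul hf hg]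
  simp only [add_apply, smul_apply, smul_eq_mul]
  ring

lemma fderiv_fun_pow_apply {f : E → ℝ} (hf : DifferentiableAt ℝ f x) (p : ℕ) (v : E) :
    fderiv ℝ (fun y => f y ^ p) x v = p * f x ^ (p - 1) * fderiv ℝ f x v := by
  rw [fderiv_fun_pow p hf, smul_apply, nsmul_eq_mul, smul_eq_mul]

end Derivatives

section EntrywiseDerivatives

variable {X E n : Type*}

/-- The matrix of entries `D Q_{αβ}` at a point, for a matrix field `Q` and a scalar
differential operator `D` such as `pt`, `px γ` or `lap`. -/
def entrywise (D : (X → ℝ) → X → ℝ) (Q : X → n → n → ℝ) (r : X) : Matrix n n ℝ :=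
  Matrix.of fun α β => D (fun q => Q q α β) r

lemma fderiv_trace_mul [Fintype n] [NormedAddCommGroup E] [NormedSpace ℝ E] {A B : E → n → n → ℝ}
    {x : E} (hA : ∀ α β, DifferentiableAt ℝ (fun y => A y α β) x)
    (hB : ∀ α β, DifferentiableAt ℝ (fun y => B y α β) x) (v : E) :
    fderiv ℝ (fun y => (Matrix.of (A y) * Matrix.of (B y)).trace) x v =
      (entrywise (fderiv ℝ · · v) A x * Matrix.of (B x)).trace +
        (Matrix.of (A x) * entrywise (fderiv ℝ · · v) B x).trace := by
  simp only [Matrix.trace, Matrix.diag_apply, Matrix.mul_apply, Matrix.of_apply, entrywise]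
  have hAB : ∀ α β, DifferentiableAt ℝ (fun y => A y α β * B y β α) x :=
    fun α β => (hA α β).mul (hB β α)
  rw [fderiv_fun_sum fun α _ => DifferentiableAt.fun_sum fun β _ => hAB α β, sum_apply,
    ← Finset.sum_add_distrib]
  refine Finset.sum_congr rfl fun α _ => ?_
  rw [fderiv_fun_sum fun β _ => hAB α β, sum_apply, ← Finset.sum_add_distrib]
  exact Finset.sum_congr rfl fun β _ => fderiv_fun_mul_apply (hA α β) (hB β α) v

end EntrywiseDerivatives

section TraceOfSquare

variable {d : ℕ} {Q : ℝ × (Fin d → ℝ) → Fin 3 → Fin 3 → ℝ}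

lemma trQ2_eq_trace : trQ2 Q = fun r => (Matrix.of (Q r) * Matrix.of (Q r)).trace := by
  funext r
  simp only [trQ2, Matrix.trace, Matrix.diag_apply, Matrix.mul_apply, Matrix.of_apply]

lemma trQ2_nonneg {r : ℝ × (Fin d → ℝ)} (hsymm : ∀ α β, Q r α β = Q r β α) : 0 ≤ trQ2 Q r := by
  rw [trQ2_eq_trace]
  exact trace_mul_self_nonneg_of_isSymm (Matrix.IsSymm.ext fun α β => hsymm β α)

lemma contDiff_entry {n : WithTop ℕ∞} (hQ : ContDiff ℝ n Q) (α β : Fin 3) :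
    ContDiff ℝ n fun q => Q q α β :=
  contDiff_pi.1 (contDiff_pi.1 hQ α) β

lemma contDiff_trQ2 {n : WithTop ℕ∞} (hQ : ContDiff ℝ n Q) : ContDiff ℝ n (trQ2 Q) :=
  ContDiff.sum fun α _ => ContDiff.sum fun β _ =>
    (contDiff_entry hQ α β).mul (contDiff_entry hQ β α)

lemma fderiv_trQ2 {r : ℝ × (Fin d → ℝ)} (hQ : DifferentiableAt ℝ Q r) (v : ℝ × (Fin d → ℝ)) :
    fderiv ℝ (trQ2 Q) r v = 2 * (Matrix.of (Q r) * entrywise (fderiv ℝ · · v) Q r).trace := by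
  have hentry : ∀ α β, DifferentiableAt ℝ (fun q => Q q α β) r := fun α β => by fun_prop
  rw [trQ2_eq_trace, fderiv_trace_mul hentry hentry, Matrix.trace_mul_comm (entrywise _ _ _)]
  ring

lemma pt_trQ2 {r : ℝ × (Fin d → ℝ)} (hQ : DifferentiableAt ℝ Q r) :
    pt (trQ2 Q) r = 2 * (Matrix.of (Q r) * entrywise pt Q r).trace :=
  fderiv_trQ2 hQ _

lemma px_trQ2 {r : ℝ × (Fin d → ℝ)} (hQ : DifferentiableAt ℝ Q r) (γ : Fin d) :
    px γ (trQ2 Q) r = 2 * (Matrix.of (Q r) * entrywise (px γ) Q r).trace :=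
  fderiv_trQ2 hQ _

lemma px_px_trQ2 (hQ : ContDiff ℝ 2 Q) (γ : Fin d) (r : ℝ × (Fin d → ℝ)) :
    px γ (px γ (trQ2 Q)) r =
      2 * ((entrywise (px γ) Q r * entrywise (px γ) Q r).trace +
        (Matrix.of (Q r) * entrywise (fun f => px γ (px γ f)) Q r).trace) := by
  have hQd : Differentiable ℝ Q := hQ.differentiable two_ne_zero
  have hentry : ∀ α β, DifferentiableAt ℝ (fun q => Q q α β) r := fun α β => by fun_prop
  have hpx : ∀ α β, Differentiable ℝ (px γ fun q => Q q α β) := fun α β =>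
    (contDiff_px γ (contDiff_entry hQ α β) one_add_one_eq_two.le).differentiable one_ne_zero
  have hpxφ : px γ (trQ2 Q) = fun r => 2 * (Matrix.of (Q r) * entrywise (px γ) Q r).trace :=
    funext fun r => px_trQ2 (hQd r) γ
  rw [hpxφ, px, fderiv_fun_const_mul_apply]
  congr 1
  exact fderiv_trace_mul hentry (fun α β => hpx α β r) _

lemma lap_trQ2 (hQ : ContDiff ℝ 2 Q) (r : ℝ × (Fin d → ℝ)) :
    lap (trQ2 Q) r = 2 * (Matrix.of (Q r) * entrywise lap Q r).trace +
      2 * ∑ γ, (entrywise (px γ) Q r * entrywise (px γ) Q r).trace := by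
  have hlap : entrywise lap Q r = ∑ γ, entrywise (fun f => px γ (px γ f)) Q r := by
    ext α β
    simp only [entrywise, lap, Matrix.of_apply, Matrix.sum_apply]
  simp only [lap, px_px_trQ2 hQ, hlap, Matrix.trace_sum, mul_add,
    Finset.sum_add_distrib, Finset.mul_sum]
  ring

end TraceOfSquare

section Subsolution

variable {d : ℕ} {κ μ : ℝ} {u : ℝ × (Fin d → ℝ) → Fin d → ℝ} {ψ : ℝ × (Fin d → ℝ) → ℝ}

/-- `ψ` is at the point `r` a subsolution `∂ₜψ + u·∇ψ ≤ κΔψ + μψ` of the advection–diffusion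
equation with drift `u`, diffusivity `κ` and growth rate `μ`. -/
def IsSubsolutionAt (κ μ : ℝ) (u : ℝ × (Fin d → ℝ) → Fin d → ℝ) (ψ : ℝ × (Fin d → ℝ) → ℝ)
    (r : ℝ × (Fin d → ℝ)) : Prop :=
  pt ψ r + ∑ γ, u r γ * px γ ψ r ≤ κ * lap ψ r + μ * ψ r

lemma px_pow (hψ : Differentiable ℝ ψ) (γ : Fin d) (p : ℕ) :
    px γ (fun q => ψ q ^ p) = fun q => p * ψ q ^ (p - 1) * px γ ψ q :=
  funext fun q => fderiv_fun_pow_apply (hψ q) p _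

lemma mul_pow_mul_lap_le_lap_pow (hψ : ContDiff ℝ 2 ψ) {r : ℝ × (Fin d → ℝ)} (hr : 0 ≤ ψ r)
    (p : ℕ) : p * ψ r ^ (p - 1) * lap ψ r ≤ lap (fun q => ψ q ^ p) r := by
  have hψd : Differentiable ℝ ψ := hψ.differentiable two_ne_zero
  simp only [lap, Finset.mul_sum, px_pow hψd]
  refine Finset.sum_le_sum fun γ _ => ?_
  have hpx : DifferentiableAt ℝ (px γ ψ) r :=
    (contDiff_px γ hψ one_add_one_eq_two.le).differentiable one_ne_zero r
  have hexpand : px γ (fun q => p * ψ q ^ (p - 1) * px γ ψ q) r =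
      p * ((p - 1 : ℕ) * ψ r ^ (p - 1 - 1)) * px γ ψ r ^ 2 +
        p * ψ r ^ (p - 1) * px γ (px γ ψ) r := by
    rw [px, fderiv_fun_mul_apply (by fun_prop) hpx, fderiv_fun_const_mul_apply,
      fderiv_fun_pow_apply (hψd r)]
    simp only [px]
    ring
  rw [hexpand]
  exact le_add_of_nonneg_left (by positivity)

lemma IsSubsolutionAt.pow (hκ : 0 ≤ κ) (hψ : ContDiff ℝ 2 ψ) {r : ℝ × (Fin d → ℝ)} (hr : 0 ≤ ψ r)
    (h : IsSubsolutionAt κ μ u ψ r) (p : ℕ) :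
    IsSubsolutionAt κ (p * μ) u (fun q => ψ q ^ p) r := by
  have hψd : Differentiable ℝ ψ := hψ.differentiable two_ne_zero
  have hpt : pt (fun q => ψ q ^ p) r = p * ψ r ^ (p - 1) * pt ψ r :=
    fderiv_fun_pow_apply (hψd r) p _
  have hadv : ∑ γ, u r γ * px γ (fun q => ψ q ^ p) r =
      p * ψ r ^ (p - 1) * ∑ γ, u r γ * px γ ψ r := by
    rw [Finset.mul_sum]
    exact Finset.sum_congr rfl fun γ _ => by rw [px_pow hψd]; ring
  have hreact : p * ψ r ^ (p - 1) * (μ * ψ r) = p * μ * ψ r ^ p := by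
    rcases p.eq_zero_or_pos with rfl | hp
    · simp
    · rw [← pow_sub_one_mul hp.ne' (ψ r)]
      ring
  calc pt (fun q => ψ q ^ p) r + ∑ γ, u r γ * px γ (fun q => ψ q ^ p) r
      = p * ψ r ^ (p - 1) * (pt ψ r + ∑ γ, u r γ * px γ ψ r) := by rw [hpt, hadv, mul_add]
    _ ≤ p * ψ r ^ (p - 1) * (κ * lap ψ r + μ * ψ r) :=
      mul_le_mul_of_nonneg_left h (by positivity)
    _ = κ * (p * ψ r ^ (p - 1) * lap ψ r) + p * μ * ψ r ^ p := by rw [← hreact]; ring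
    _ ≤ κ * lap (fun q => ψ q ^ p) r + p * μ * ψ r ^ p := by
      gcongr
      exact mul_pow_mul_lap_le_lap_pow hψ hr p

/-- The flux `κ∇ψ − ψu` of the advection–diffusion equation, in the direction `γ`. -/
noncomputable def flux (κ : ℝ) (u : ℝ × (Fin d → ℝ) → Fin d → ℝ) (ψ : ℝ × (Fin d → ℝ) → ℝ)
    (γ : Fin d) (r : ℝ × (Fin d → ℝ)) : ℝ :=
  κ * px γ ψ r - u r γ * ψ r

lemma contDiff_flux (hψ : ContDiff ℝ 2 ψ) (hu : ContDiff ℝ 1 u) (κ : ℝ) (γ : Fin d) :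
    ContDiff ℝ 1 (flux κ u ψ γ) :=
  (contDiff_const.mul (contDiff_px γ hψ one_add_one_eq_two.le)).sub
    ((contDiff_pi.1 hu γ).mul (hψ.of_le one_le_two))

lemma sum_px_flux (hψ : ContDiff ℝ 2 ψ) {r : ℝ × (Fin d → ℝ)} (hu : DifferentiableAt ℝ u r)
    (hdiv : DivFree u r) (κ : ℝ) :
    ∑ γ, px γ (flux κ u ψ γ) r = κ * lap ψ r - ∑ γ, u r γ * px γ ψ r := by
  have hψr : DifferentiableAt ℝ ψ r := hψ.differentiable two_ne_zero r
  have hur : ∀ γ, DifferentiableAt ℝ (fun q => u q γ) r := fun γ => by fun_prop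
  have hpx : ∀ γ, DifferentiableAt ℝ (px γ ψ) r := fun γ =>
    (contDiff_px γ hψ one_add_one_eq_two.le).differentiable one_ne_zero r
  have hflux : ∀ γ, px γ (flux κ u ψ γ) r =
      κ * px γ (px γ ψ) r - (px γ (fun q => u q γ) r * ψ r + u r γ * px γ ψ r) := fun γ => by
    unfold flux
    rw [px, fderiv_fun_sub ((hpx γ).const_mul κ) ((hur γ).fun_mul hψr), sub_apply,
      fderiv_fun_const_mul_apply, fderiv_fun_mul_apply (hur γ) hψr]
    rfl
  simp only [hflux, Finset.sum_sub_distrib, Finset.sum_add_distrib, ← Finset.mul_sum,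
    ← Finset.sum_mul]
  rw [show ∑ γ, px γ (fun q => u q γ) r = 0 from hdiv, zero_mul, zero_add, lap]

lemma IsSubsolutionAt.pt_le (hψ : ContDiff ℝ 2 ψ) {r : ℝ × (Fin d → ℝ)}
    (hu : DifferentiableAt ℝ u r) (hdiv : DivFree u r) (h : IsSubsolutionAt κ μ u ψ r) :
    pt ψ r ≤ μ * ψ r + ∑ γ, px γ (flux κ u ψ γ) r := by
  rw [IsSubsolutionAt] at h
  rw [sum_px_flux hψ hu hdiv κ]
  linarith

end Subsolution

section Integration

variable {d : ℕ} {K : Set (Fin d → ℝ)} {f : ℝ × (Fin d → ℝ) → ℝ}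

lemma integrableOn_slice (hf : Continuous f) (hK : IsCompact K) (t : ℝ) :
    IntegrableOn (fun x => f (t, x)) K :=
  (hf.comp (Continuous.prodMk_right t)).continuousOn.integrableOn_compact hK

lemma setIntegral_px_eq_zero (hf : ContDiff ℝ 1 f) (hK : IsCompact K) {t : ℝ}
    (hfK : ∀ x ∉ K, f (t, x) = 0) (γ : Fin d) : ∫ x in K, px γ f (t, x) = 0 := by
  have hfd : Differentiable ℝ f := hf.differentiable one_ne_zero
  have hslice : ContDiff ℝ 1 fun x => f (t, x) := hf.comp (contDiff_prodMk_right t)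
  have hsupp : HasCompactSupport fun x => f (t, x) := HasCompactSupport.intro hK hfK
  rw [setIntegral_eq_integral_of_forall_compl_eq_zero fun x hx =>
    px_eq_zero_of_notMem (hfd _) hK.isClosed hfK γ hx]
  simp only [px_eq_fderiv_slice (hfd _)]
  have hparts := integral_mul_fderiv_eq_neg_fderiv_mul_of_integrable
    (μ := (volume : Measure (Fin d → ℝ))) (f := fun _ => (1 : ℝ)) (g := fun x => f (t, x))
    (v := Pi.single γ 1) (by simp)
    (by simpa using ((hslice.continuous_fderiv one_ne_zero).clm_apply
      continuous_const).integrable_of_hasCompactSupport (hsupp.fderiv_apply ℝ _))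
    (by simpa using hslice.continuous.integrable_of_hasCompactSupport hsupp)
    (fun x _ => differentiableAt_const 1) (fun x _ => hslice.differentiable one_ne_zero x)
  simpa using hparts

lemma hasDerivAt_setIntegral_pt (hf : ContDiff ℝ 1 f) (hK : IsCompact K) (t : ℝ) :
    HasDerivAt (fun s => ∫ x in K, f (s, x)) (∫ x in K, pt f (t, x)) t := by
  have hpt : Continuous (pt f) := (contDiff_pt hf (zero_add 1).le).continuous
  obtain ⟨M, hM⟩ := ((isCompact_closedBall t 1).prod hK).exists_bound_of_continuousOn
    hpt.continuousOn
  refine (hasDerivAt_integral_of_dominated_loc_of_deriv_le (F := fun s x => f (s, x))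
    (F' := fun s x => pt f (s, x)) (bound := fun _ => M)
    (Metric.closedBall_mem_nhds t one_pos) ?_ (integrableOn_slice hf.continuous hK t)
    (integrableOn_slice hpt hK t).aestronglyMeasurable ?_
    (integrableOn_const hK.measure_lt_top.ne) ?_).2
  · exact .of_forall fun s => (integrableOn_slice hf.continuous hK s).aestronglyMeasurable
  · exact (ae_restrict_iff' hK.measurableSet).2 (.of_forall fun x hx s hs => hM (s, x) ⟨hs, hx⟩)
  · exact .of_forall fun x s _ => hasDerivAt_pt (hf.differentiable one_ne_zero (s, x))

end Integration

section IntegralGrowth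

variable {d : ℕ} {κ μ t : ℝ} {K : Set (Fin d → ℝ)} {u : ℝ × (Fin d → ℝ) → Fin d → ℝ}
  {ψ : ℝ × (Fin d → ℝ) → ℝ}

lemma setIntegral_pt_le (hψ : ContDiff ℝ 2 ψ) (hu : ContDiff ℝ 1 u) (hK : IsCompact K)
    (hψK : ∀ x ∉ K, ψ (t, x) = 0) (hdiv : ∀ x, DivFree u (t, x))
    (hsub : ∀ x, IsSubsolutionAt κ μ u ψ (t, x)) :
    ∫ x in K, pt ψ (t, x) ≤ μ * ∫ x in K, ψ (t, x) := by
  have hfluxK : ∀ γ, ∀ x ∉ K, flux κ u ψ γ (t, x) = 0 := fun γ x hx => by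
    simp only [flux, hψK x hx,
      px_eq_zero_of_notMem (hψ.differentiable two_ne_zero _) hK.isClosed hψK γ hx, mul_zero,
      sub_zero]
  have hψi : IntegrableOn (fun x => μ * ψ (t, x)) K :=
    (integrableOn_slice hψ.continuous hK t).const_mul μ
  have hpti : IntegrableOn (fun x => pt ψ (t, x)) K :=
    integrableOn_slice (contDiff_pt hψ one_add_one_eq_two.le).continuous hK t
  have hfluxi : ∀ γ ∈ Finset.univ, IntegrableOn (fun x => px γ (flux κ u ψ γ) (t, x)) K :=
    fun γ _ => integrableOn_slice
      (contDiff_px γ (contDiff_flux hψ hu κ γ) (zero_add 1).le).continuous hK t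
  calc ∫ x in K, pt ψ (t, x)
      ≤ ∫ x in K, (μ * ψ (t, x) + ∑ γ, px γ (flux κ u ψ γ) (t, x)) :=
        integral_mono hpti (hψi.add (integrable_finsetSum _ hfluxi)) fun x =>
          (hsub x).pt_le hψ (hu.differentiable one_ne_zero _) (hdiv x)
    _ = μ * (∫ x in K, ψ (t, x)) + ∑ γ, ∫ x in K, px γ (flux κ u ψ γ) (t, x) := by
        rw [integral_add hψi (integrable_finsetSum _ hfluxi), integral_finsetSum _ hfluxi,
          integral_const_mul]
    _ = μ * ∫ x in K, ψ (t, x) := by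
        rw [Finset.sum_eq_zero fun γ _ =>
          setIntegral_px_eq_zero (contDiff_flux hψ hu κ γ) hK (hfluxK γ) γ, add_zero]

lemma integral_le_exp_mul_of_isSubsolutionAt (hψ : ContDiff ℝ 2 ψ) (hu : ContDiff ℝ 1 u)
    (hK : IsCompact K) (ht : 0 ≤ t) (hψK : ∀ s ∈ Set.Icc 0 t, ∀ x ∉ K, ψ (s, x) = 0)
    (hdiv : ∀ s ∈ Set.Icc 0 t, ∀ x, DivFree u (s, x))
    (hsub : ∀ s ∈ Set.Icc 0 t, ∀ x, IsSubsolutionAt κ μ u ψ (s, x)) :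
    ∫ x, ψ (t, x) ≤ Real.exp (μ * t) * ∫ x, ψ (0, x) := by
  have hder := hasDerivAt_setIntegral_pt (hψ.of_le one_le_two) hK
  have hgronwall := le_gronwallBound_of_liminf_deriv_right_le
    (fun s _ => (hder s).continuousAt.continuousWithinAt)
    (fun s _ _ hlt => (hder s).hasDerivWithinAt.liminf_right_slope_le hlt) le_rfl
    (fun s hs => (setIntegral_pt_le hψ hu hK (hψK s (Set.Ico_subset_Icc_self hs))
      (hdiv s (Set.Ico_subset_Icc_self hs)) (hsub s (Set.Ico_subset_Icc_self hs))).trans_eq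
        (add_zero _).symm) t (Set.right_mem_Icc.2 ht)
  rw [gronwallBound_ε0, sub_zero, mul_comm,
    setIntegral_eq_integral_of_forall_compl_eq_zero (hψK t (Set.right_mem_Icc.2 ht)),
    setIntegral_eq_integral_of_forall_compl_eq_zero (hψK 0 (Set.left_mem_Icc.2 ht))] at hgronwall
  exact hgronwall

end IntegralGrowth

section QTensor

variable {d : ℕ} {a b c Γ L : ℝ} {Q : ℝ × (Fin d → ℝ) → Fin 3 → Fin 3 → ℝ}
  {u : ℝ × (Fin d → ℝ) → Fin d → ℝ} {r : ℝ × (Fin d → ℝ)}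

lemma QTensorEq.matrix_eq (h : QTensorEq L Γ a b c Q u r) :
    entrywise pt Q r + ∑ γ, u r γ • entrywise (px γ) Q r -
        (Matrix.of (vort3 u r) * Matrix.of (Q r) - Matrix.of (Q r) * Matrix.of (vort3 u r)) =
      Γ • (L • entrywise lap Q r - a • Matrix.of (Q r) +
        b • tracelessPart (Matrix.of (Q r) * Matrix.of (Q r)) -
        (c * trQ2 Q r) • Matrix.of (Q r)) := by
  ext α β
  have hαβ := h α β
  simp only [entrywise, tracelessPart, Matrix.add_apply, Matrix.sub_apply, Matrix.sum_apply,
    Matrix.smul_apply, Matrix.mul_apply, Matrix.of_apply, Matrix.one_apply, smul_eq_mul,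
    Fintype.card_fin, ← Finset.sum_sub_distrib, trQ2_eq_trace, molH, kron] at hαβ ⊢
  rw [hαβ]
  push_cast
  ring

lemma QTensorEq.trace_mul_eq (h : QTensorEq L Γ a b c Q u r) :
    (Matrix.of (Q r) * entrywise pt Q r).trace +
        ∑ γ, u r γ * (Matrix.of (Q r) * entrywise (px γ) Q r).trace =
      Γ * (L * (Matrix.of (Q r) * entrywise lap Q r).trace - a * trQ2 Q r +
        b * (Matrix.of (Q r) * tracelessPart (Matrix.of (Q r) * Matrix.of (Q r))).trace -
          c * trQ2 Q r ^ 2) := by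
  have htrace := congr_arg (fun A => (Matrix.of (Q r) * A).trace) h.matrix_eq
  simp only [mul_sub (Matrix.of (Q r)) (_ + _), Matrix.trace_sub _ (Matrix.of (Q r) * (_ - _)),
    trace_mul_commutator_eq_zero, sub_zero] at htrace
  simp only [mul_sub, mul_add, Matrix.mul_sum, Matrix.mul_smul, Matrix.trace_sub, Matrix.trace_add,
    Matrix.trace_sum, Matrix.trace_smul, smul_eq_mul] at htrace
  rw [htrace, trQ2_eq_trace]
  ring

lemma QTensorEq.isSubsolutionAt_trQ2 (h : QTensorEq L Γ a b c Q u r) (hc : 0 < c) (hΓ : 0 ≤ Γ)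
    (hL : 0 ≤ L) (hQ : ContDiff ℝ 2 Q) (hsymm : ∀ q α β, Q q α β = Q q β α) :
    IsSubsolutionAt (Γ * L) (2 * Γ * (b ^ 2 / (4 * c) - a)) u (trQ2 Q) r := by
  have hQr : DifferentiableAt ℝ Q r := hQ.differentiable two_ne_zero r
  have hgrad : 0 ≤ ∑ γ, (entrywise (px γ) Q r * entrywise (px γ) Q r).trace :=
    Finset.sum_nonneg fun γ _ => trace_mul_self_nonneg_of_isSymm (Matrix.IsSymm.ext fun α β => by
      simp only [entrywise, Matrix.of_apply, hsymm _ α β])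
  have hbulk := trace_mul_tracelessPart_sq_le
    (Matrix.IsSymm.ext fun α β => hsymm r β α : (Matrix.of (Q r)).IsSymm) b hc
  rw [← congrFun trQ2_eq_trace r] at hbulk
  have hadv : ∑ γ, u r γ * px γ (trQ2 Q) r =
      2 * ∑ γ, u r γ * (Matrix.of (Q r) * entrywise (px γ) Q r).trace := by
    simp only [px_trQ2 hQr, Finset.mul_sum, mul_left_comm]
  calc pt (trQ2 Q) r + ∑ γ, u r γ * px γ (trQ2 Q) r
      = 2 * Γ * (L * (Matrix.of (Q r) * entrywise lap Q r).trace - a * trQ2 Q r +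
          (b * (Matrix.of (Q r) * tracelessPart (Matrix.of (Q r) * Matrix.of (Q r))).trace -
            c * trQ2 Q r ^ 2)) := by
        rw [pt_trQ2 hQr, hadv, ← mul_add, h.trace_mul_eq]
        ring
    _ ≤ 2 * Γ * (L * (lap (trQ2 Q) r / 2) - a * trQ2 Q r + b ^ 2 / (4 * c) * trQ2 Q r) := by
        gcongr
        · linarith [lap_trQ2 hQ r]
        · linarith
    _ = Γ * L * lap (trQ2 Q) r + 2 * Γ * (b ^ 2 / (4 * c) - a) * trQ2 Q r := by ring

end QTensor

lemma rpow_le_exp_mul_rpow {x y s k : ℝ} (hx : 0 ≤ x) (hy : 0 ≤ y) (hk : 0 ≤ k)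
    (h : x ≤ Real.exp s * y) : x ^ k ≤ Real.exp (s * k) * y ^ k := by
  rw [Real.exp_mul, ← Real.mul_rpow (Real.exp_pos s).le hy]
  exact Real.rpow_le_rpow hx h hk

theorem Lp_growth_estimate_general {d : ℕ} {a b c Γ L : ℝ} (hc : 0 < c) (hΓ : 0 ≤ Γ) (hL : 0 ≤ L)
    {p : ℕ} (hp : 1 ≤ p) {Q : ℝ × (Fin d → ℝ) → Fin 3 → Fin 3 → ℝ}
    {u : ℝ × (Fin d → ℝ) → Fin d → ℝ} (hQ : ContDiff ℝ 2 Q) (hu : ContDiff ℝ 1 u)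
    (hsymm : ∀ q α β, Q q α β = Q q β α) {t : ℝ} (ht : 0 ≤ t) {K : Set (Fin d → ℝ)}
    (hK : IsCompact K) (hQK : ∀ s ∈ Set.Icc 0 t, ∀ x ∉ K, Q (s, x) = 0)
    (heq : ∀ s ∈ Set.Icc 0 t, ∀ x, QTensorEq L Γ a b c Q u (s, x))
    (hdiv : ∀ s ∈ Set.Icc 0 t, ∀ x, DivFree u (s, x)) :
    (∫ x, trQ2 Q (t, x) ^ p) ≤
        Real.exp (p * (2 * Γ * (b ^ 2 / (4 * c) - a)) * t) * ∫ x, trQ2 Q (0, x) ^ p ∧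
      (∫ x, trQ2 Q (t, x) ^ p) ^ ((1 : ℝ) / (2 * p)) ≤
        Real.exp (p * (2 * Γ * (b ^ 2 / (4 * c) - a)) * t / (2 * p)) *
          (∫ x, trQ2 Q (0, x) ^ p) ^ ((1 : ℝ) / (2 * p)) := by
  have hnonneg : ∀ q, 0 ≤ trQ2 Q q := fun q => trQ2_nonneg (hsymm q)
  have hφ : ContDiff ℝ 2 (trQ2 Q) := contDiff_trQ2 hQ
  have hφK : ∀ s ∈ Set.Icc 0 t, ∀ x ∉ K, trQ2 Q (s, x) ^ p = 0 := fun s hs x hx => by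
    simp [trQ2, hQK s hs x hx, Nat.ne_zero_of_lt hp]
  have hgrowth := integral_le_exp_mul_of_isSubsolutionAt (hφ.pow p) hu hK ht hφK hdiv
    fun s hs x => ((heq s hs x).isSubsolutionAt_trQ2 hc hΓ hL hQ hsymm).pow
      (mul_nonneg hΓ hL) hφ (hnonneg _) p
  have hint : ∀ s, 0 ≤ ∫ x, trQ2 Q (s, x) ^ p := fun s =>
    integral_nonneg fun x => pow_nonneg (hnonneg _) p
  have hroot := rpow_le_exp_mul_rpow (k := 1 / (2 * p)) (hint t) (hint 0) (by positivity) hgrowth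
  rw [mul_one_div] at hroot
  exact ⟨hgrowth, hroot⟩

/-- Along smooth, uniformly compactly supported solutions of the Beris–Edwards system on
`[0,T) × ℝ^d` (`d ∈ {2,3}`, `c > 0`), there is a constant `C = C(a,b,c,p,Γ)` such that
`∫ (tr Q²(t))^p ≤ e^{Ct} ∫ (tr Q²(0))^p`; in particular
`‖Q(t,·)‖_{L^{2p}} ≤ e^{Ct/(2p)}‖Q(0,·)‖_{L^{2p}}`. -/
theorem Lp_growth_estimate
    (a b c Γ : ℝ) (hc : 0 < c) (hΓ : 0 < Γ) (p : ℕ) (hp : 1 ≤ p) :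
    ∃ C : ℝ, ∀ (d : ℕ), d = 2 ∨ d = 3 → ∀ (T : ℝ≥0∞), 0 < T →
      ∀ (L ν : ℝ), 0 < L → 0 < ν →
      ∀ (Q : ℝ × (Fin d → ℝ) → Fin 3 → Fin 3 → ℝ)
        (u : ℝ × (Fin d → ℝ) → Fin d → ℝ)
        (P : ℝ × (Fin d → ℝ) → ℝ),
      ContDiff ℝ (⊤ : ℕ∞) Q → ContDiff ℝ (⊤ : ℕ∞) u → ContDiff ℝ (⊤ : ℕ∞) P →
      (∀ q α β, Q q α β = Q q β α) → (∀ q, ∑ α, Q q α α = 0) →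
      (∀ t₀ : ℝ, 0 ≤ t₀ → ENNReal.ofReal t₀ < T →
        ∃ R : ℝ, ∀ t : ℝ, ∀ x : Fin d → ℝ, 0 ≤ t → t ≤ t₀ → R ≤ ‖x‖ →
          Q (t, x) = 0 ∧ u (t, x) = 0 ∧ P (t, x) = 0) →
      (∀ t : ℝ, ∀ x : Fin d → ℝ, 0 ≤ t → ENNReal.ofReal t < T →
        QTensorEq L Γ a b c Q u (t, x) ∧ MomentumEq L ν Q u P (t, x) ∧ DivFree u (t, x)) →
      ∀ t : ℝ, 0 ≤ t → ENNReal.ofReal t < T →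
        (∫ x : Fin d → ℝ, (trQ2 Q (t, x)) ^ p)
          ≤ Real.exp (C * t) * ∫ x : Fin d → ℝ, (trQ2 Q (0, x)) ^ p
        ∧ (∫ x : Fin d → ℝ, (trQ2 Q (t, x)) ^ p) ^ ((1 : ℝ) / (2 * p))
          ≤ Real.exp (C * t / (2 * p)) *
              (∫ x : Fin d → ℝ, (trQ2 Q (0, x)) ^ p) ^ ((1 : ℝ) / (2 * p)) := by
  refine ⟨p * (2 * Γ * (b ^ 2 / (4 * c) - a)), ?_⟩
  intro d _ T _ L ν hL _ Q u P hQ hu _ hsymm _ hsupp hsys t ht htT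
  obtain ⟨R, hR⟩ := hsupp t ht htT
  have hlt : ∀ s ∈ Set.Icc 0 t, ENNReal.ofReal s < T := fun s hs =>
    (ENNReal.ofReal_le_ofReal hs.2).trans_lt htT
  have hQR : ∀ s ∈ Set.Icc 0 t, ∀ x ∉ Metric.closedBall 0 R, Q (s, x) = 0 := fun s hs x hx =>
    (hR s x hs.1 hs.2 (not_le.1 (mt mem_closedBall_zero_iff.2 hx)).le).1
  exact Lp_growth_estimate_general hc hΓ.le hL.le hp (contDiff_infty.1 hQ 2)
    (mod_cast contDiff_infty.1 hu 1) hsymm ht (isCompact_closedBall 0 R) hQR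
    (fun s hs x => (hsys s x hs.1 (hlt s hs)).1) (fun s hs x => (hsys s x hs.1 (hlt s hs)).2.2)
end

section
/- Let d ∈ {2,3}, T ∈ (0,∞], L > 0, Γ > 0, ν > 0, a, b ∈ ℝ and c > 0. Let Q : [0,T)×ℝ^d → S₀, u : [0,T)×ℝ^d → ℝ^d and P : [0,T)×ℝ^d → ℝ be smooth, with x ↦ Q(t,x), x ↦ u(t,x), x ↦ P(t,x) compactly supported uniformly on compact subintervals of [0,T), satisfying the coupled system pointwise. Then there exists a constant C, depending only on a, b, c, d, L and Γ, such that for all t ∈ [0,T): ‖u(t,·)‖²_{L²} + 2ν∫₀ᵗ‖∇u(s,·)‖²_{L²} ds + L‖∇Q(t,·)‖²_{L²} + ΓL²∫₀ᵗ‖ΔQ(s,·)‖²_{L²} ds ≤ ‖u(0,·)‖²_{L²} + L‖∇Q(0,·)‖²_{L²} + C e^{Ct}( ‖Q(0,·)‖²_{L²} + ‖Q(0,·)‖⁶_{L⁶} ). -/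
open MeasureTheory ENNReal

/-!
Test `∂ₜu` with `u` and `∂ₜQ` with `-LΔQ`. After integration by parts, the Ericksen stress in the
momentum equation cancels the transport of `Q`, and the antisymmetric stress cancels the corotation
of `Q` by the vorticity, so only the viscous and elastic dissipation and the work of the bulk field
`F(Q)` survive. Completing the square in `LΔQ + F(Q)` costs half of the elastic dissipation and
leaves `Γ ∫ |F(Q)|² ≲ ∫ |Q|² + |Q|⁶`. These two moments grow at most exponentially: tested with
`|Q|^{2k} Q`, the corotation drops out, diffusion has a sign, and `c > 0` lets the quartic part of
the bulk energy absorb the cubic one.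
-/

open Set

namespace BerisEdwards

section DirectionalDerivative

variable {E ι : Type*} [NormedAddCommGroup E] [NormedSpace ℝ E] [Fintype ι] {p : E}

theorem fderiv_mul_apply {f g : E → ℝ} (hf : DifferentiableAt ℝ f p) (hg : DifferentiableAt ℝ g p)
    (v : E) :
    fderiv ℝ (fun q => f q * g q) p v = fderiv ℝ f p v * g p + f p * fderiv ℝ g p v := by
  rw [fderiv_fun_mul hf hg]
  simp only [add_apply, smul_apply, smul_eq_mul]
  ring

theorem fderiv_pow_apply {f : E → ℝ} (hf : DifferentiableAt ℝ f p) (n : ℕ) (v : E) :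
    fderiv ℝ (fun q => f q ^ n) p v = n * f p ^ (n - 1) * fderiv ℝ f p v := by
  simp [fderiv_fun_pow n hf]

theorem fderiv_sum_apply {f : ι → E → ℝ} (hf : ∀ i, DifferentiableAt ℝ (f i) p) (v : E) :
    fderiv ℝ (fun q => ∑ i, f i q) p v = ∑ i, fderiv ℝ (f i) p v := by
  rw [fderiv_fun_sum fun i _ => hf i, sum_apply]

theorem fderiv_sum_sq_apply {f : ι → E → ℝ} (hf : ∀ i, DifferentiableAt ℝ (f i) p) (v : E) :
    fderiv ℝ (fun q => ∑ i, f i q ^ 2) p v = 2 * ∑ i, f i p * fderiv ℝ (f i) p v := by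
  rw [fderiv_sum_apply fun i => (hf i).fun_pow 2, Finset.mul_sum]
  refine Finset.sum_congr rfl fun i _ => ?_
  rw [fderiv_pow_apply (hf i), pow_one, Nat.cast_ofNat, mul_assoc]

theorem fderiv_apply_comm {f : E → ℝ} (hf : ContDiff ℝ 2 f) (v w p : E) :
    fderiv ℝ (fun q => fderiv ℝ f q v) p w = fderiv ℝ (fun q => fderiv ℝ f q w) p v := by
  have hd : DifferentiableAt ℝ (fderiv ℝ f) p :=
    (hf.fderiv_right (m := 1) (by norm_num)).differentiable one_ne_zero p
  have hsymm : IsSymmSndFDerivAt ℝ f p := hf.contDiffAt.isSymmSndFDerivAt (by simp)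
  simpa [fderiv_clm_apply, hd] using hsymm.eq w v

end DirectionalDerivative

/-- Points `(t, x)` of space-time. -/
abbrev SpaceTime (d : ℕ) := ℝ × (Fin d → ℝ)

section Derivatives

variable {d : ℕ} {m n : WithTop ℕ∞} {f : SpaceTime d → ℝ}

theorem contDiff_pt (hf : ContDiff ℝ n f) (hmn : m + 1 ≤ n := by norm_num) :
    ContDiff ℝ m (pt f) :=
  (hf.fderiv_right hmn).clm_apply contDiff_const

theorem contDiff_px (hf : ContDiff ℝ n f) (γ : Fin d) (hmn : m + 1 ≤ n := by norm_num) :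
    ContDiff ℝ m (px γ f) :=
  (hf.fderiv_right hmn).clm_apply contDiff_const

theorem contDiff_lap (hf : ContDiff ℝ n f) (hmn : m + 1 + 1 ≤ n := by norm_num) :
    ContDiff ℝ m (lap f) :=
  ContDiff.sum fun γ _ => contDiff_px (contDiff_px hf γ hmn) γ le_rfl

theorem px_comm (hf : ContDiff ℝ 2 f) (α β : Fin d) (p : SpaceTime d) :
    px α (px β f) p = px β (px α f) p :=
  fderiv_apply_comm hf _ _ p

theorem pt_px_comm (hf : ContDiff ℝ 2 f) (γ : Fin d) (p : SpaceTime d) :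
    pt (px γ f) p = px γ (pt f) p :=
  fderiv_apply_comm hf _ _ p

/-- The inner product `∇f · ∇g` of the spatial gradients. -/
noncomputable def gradDot (f g : SpaceTime d → ℝ) (p : SpaceTime d) : ℝ :=
  ∑ γ, px γ f p * px γ g p

/-- The transport derivative `u · ∇f`. -/
noncomputable def advect (u : SpaceTime d → Fin d → ℝ) (f : SpaceTime d → ℝ) (p : SpaceTime d) :
    ℝ :=
  ∑ γ, u p γ * px γ f p

theorem contDiff_gradDot {g : SpaceTime d → ℝ} (hf : ContDiff ℝ n f) (hg : ContDiff ℝ n g)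
    (hmn : m + 1 ≤ n := by norm_num) : ContDiff ℝ m (gradDot f g) :=
  ContDiff.sum fun γ _ => (contDiff_px hf γ hmn).mul (contDiff_px hg γ hmn)

theorem contDiff_advect {u : SpaceTime d → Fin d → ℝ} (hu : ContDiff ℝ m u) (hf : ContDiff ℝ n f)
    (hmn : m + 1 ≤ n := by norm_num) : ContDiff ℝ m (advect u f) :=
  ContDiff.sum fun γ _ => (contDiff_pi.1 hu γ).mul (contDiff_px hf γ hmn)

theorem fderiv_advection (u : SpaceTime d → Fin d → ℝ) (f : SpaceTime d → ℝ) (p : SpaceTime d) :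
    fderiv ℝ f p (0, u p) = advect u f p := by
  have hdir : ((0 : ℝ), u p) = ∑ γ, u p γ • ((0 : ℝ), (Pi.single γ 1 : Fin d → ℝ)) := by
    ext1
    · simp [Prod.fst_sum]
    · simpa only [Prod.snd_sum, Prod.smul_snd] using pi_eq_sum_univ' (u p)
  rw [hdir, map_sum]
  exact Finset.sum_congr rfl fun γ _ => by rw [map_smul, smul_eq_mul, px]

theorem fderiv_material (u : SpaceTime d → Fin d → ℝ) (f : SpaceTime d → ℝ) (p : SpaceTime d) :
    fderiv ℝ f p (1, u p) = pt f p + advect u f p := by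
  rw [← fderiv_advection, pt, ← map_add, Prod.mk_add_mk, add_zero, zero_add]

theorem px_advect {u : SpaceTime d → Fin d → ℝ} (hu : ContDiff ℝ 1 u) (hf : ContDiff ℝ 2 f)
    (γ : Fin d) (p : SpaceTime d) :
    px γ (advect u f) p
      = ∑ α, px γ (fun q => u q α) p * px α f p + advect u (px γ f) p := by
  have hu' := fun α => (contDiff_pi.1 hu α).differentiable one_ne_zero p
  have hf' := fun α => (contDiff_px (m := 1) hf α).differentiable one_ne_zero p
  refine (fderiv_sum_apply (fun α => (hu' α).mul (hf' α)) _).trans ?_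
  rw [advect, ← Finset.sum_add_distrib]
  refine Finset.sum_congr rfl fun α _ => (fderiv_mul_apply (hu' α) (hf' α) _).trans ?_
  rw [px_comm hf α γ]
  rfl

end Derivatives

section Slices

variable {d : ℕ} {f : SpaceTime d → ℝ} {s : ℝ} {x : Fin d → ℝ}

theorem hasFDerivAt_slice (hf : DifferentiableAt ℝ f (s, x)) :
    HasFDerivAt (fun y => f (s, y))
      ((fderiv ℝ f (s, x)).comp (ContinuousLinearMap.inr ℝ ℝ (Fin d → ℝ))) x :=
  hf.hasFDerivAt.comp x (hasFDerivAt_prodMk_right s x)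

theorem hasDerivAt_timeSlice (hf : DifferentiableAt ℝ f (s, x)) :
    HasDerivAt (fun r => f (r, x)) (pt f (s, x)) s :=
  hf.hasFDerivAt.comp_hasDerivAt s ((hasDerivAt_id s).prodMk (hasDerivAt_const s x))

end Slices

section Support

/-- `f(t, x)` vanishes for times `t ∈ J` and positions `‖x‖ > R`: the uniform compact support in
space of a field over the time window `J`. Nothing is required at times outside `J`. -/
def VanishesOutside {d : ℕ} {M : Type*} [Zero M] (J : Set ℝ) (R : ℝ) (f : SpaceTime d → M) :
    Prop :=
  ∀ s ∈ J, ∀ x, R < ‖x‖ → f (s, x) = 0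

namespace VanishesOutside

variable {d : ℕ} {J : Set ℝ} {R : ℝ} {f : SpaceTime d → ℝ}

theorem map {M N : Type*} [Zero M] [Zero N] {F : SpaceTime d → M} (hF : VanishesOutside J R F)
    {φ : M → N} (hφ : φ 0 = 0) : VanishesOutside J R (fun p => φ (F p)) :=
  fun s hs x hx => by simp only [hF s hs x hx, hφ]

theorem mul_left (hf : VanishesOutside J R f) (g : SpaceTime d → ℝ) :
    VanishesOutside J R (fun p => g p * f p) :=
  fun s hs x hx => by simp only [hf s hs x hx, mul_zero]

theorem mul_right (hf : VanishesOutside J R f) (g : SpaceTime d → ℝ) :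
    VanishesOutside J R (fun p => f p * g p) :=
  fun s hs x hx => by simp only [hf s hs x hx, zero_mul]

theorem add {g : SpaceTime d → ℝ} (hf : VanishesOutside J R f) (hg : VanishesOutside J R g) :
    VanishesOutside J R (fun p => f p + g p) :=
  fun s hs x hx => by simp only [hf s hs x hx, hg s hs x hx, add_zero]

theorem sum {ι : Type*} [Fintype ι] {f : ι → SpaceTime d → ℝ}
    (hf : ∀ i, VanishesOutside J R (f i)) : VanishesOutside J R (fun p => ∑ i, f i p) :=
  fun s hs x hx => Finset.sum_eq_zero fun i _ => hf i s hs x hx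

theorem px (hf : VanishesOutside J R f) (γ : Fin d) : VanishesOutside J R (px γ f) := by
  intro s hs x hx
  by_cases hd : DifferentiableAt ℝ f (s, x)
  · have hzero : (fun y => f (s, y)) =ᶠ[nhds x] fun _ => 0 :=
      ((isOpen_lt continuous_const continuous_norm).eventually_mem hx).mono (hf s hs)
    have hfderiv := (hasFDerivAt_slice hd).unique
      ((hasFDerivAt_const 0 x).congr_of_eventuallyEq hzero)
    exact congr($hfderiv (Pi.single γ 1))
  · rw [_root_.px, fderiv_zero_of_not_differentiableAt hd, zero_apply]

theorem pt (hf : VanishesOutside J R f) (hJ : UniqueDiffOn ℝ J) : VanishesOutside J R (pt f) := by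
  intro s hs x hx
  by_cases hd : DifferentiableAt ℝ f (s, x)
  · have hzero : HasDerivWithinAt (fun r => f (r, x)) 0 J s :=
      (hasDerivWithinAt_const s J 0).congr (fun r hr => hf r hr x hx) (hf s hs x hx)
    exact (hJ s hs).eq_deriv _ (hasDerivAt_timeSlice hd).hasDerivWithinAt hzero
  · rw [_root_.pt, fderiv_zero_of_not_differentiableAt hd, zero_apply]

theorem lap (hf : VanishesOutside J R f) : VanishesOutside J R (lap f) :=
  sum fun γ => (hf.px γ).px γ

theorem gradDot (hf : VanishesOutside J R f) (g : SpaceTime d → ℝ) :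
    VanishesOutside J R (gradDot f g) :=
  sum fun γ => (hf.px γ).mul_right (_root_.px γ g)

theorem integrable (hf : VanishesOutside J R f) (hc : Continuous f) {s : ℝ} (hs : s ∈ J) :
    Integrable (fun x => f (s, x)) := by
  refine (hc.comp (.prodMk_right s)).integrable_of_hasCompactSupport ?_
  exact .intro (isCompact_closedBall 0 R) fun x hx => hf s hs x (by simpa using hx)

theorem continuousOn_integral (hf : VanishesOutside J R f) (hc : Continuous f) :
    ContinuousOn (fun s => ∫ x, f (s, x)) J :=
  continuousOn_integral_of_compact_support (isCompact_closedBall 0 R) hc.continuousOn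
    fun s x hs hx => hf s hs x (by simpa using hx)

theorem intervalIntegrable_integral {a b t : ℝ} (hf : VanishesOutside (Icc a b) R f)
    (hc : Continuous f) (ht : t ∈ Icc a b) :
    IntervalIntegrable (fun s => ∫ x, f (s, x)) volume a t := by
  refine ((hf.continuousOn_integral hc).mono ?_).intervalIntegrable
  rw [uIcc_of_le ht.1]
  exact Icc_subset_Icc_right ht.2

theorem integrable_prod {a b : ℝ} (hf : VanishesOutside (Icc a b) R f) (hc : Continuous f) :
    Integrable f ((volume.restrict (Icc a b)).prod volume) := by
  have hball : IntegrableOn f (Icc a b ×ˢ Metric.closedBall 0 R) (volume.prod volume) :=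
    hc.continuousOn.integrableOn_compact (isCompact_Icc.prod (isCompact_closedBall _ _))
  have hslab : IntegrableOn f (Icc a b ×ˢ univ) (volume.prod volume) := by
    refine hball.of_forall_sdiff_eq_zero (measurableSet_Icc.prod .univ) ?_
    rintro ⟨s, x⟩ ⟨⟨hs, -⟩, hx⟩
    exact hf s hs x (not_le.1 fun h => hx ⟨hs, by simpa using h⟩)
  rwa [IntegrableOn, ← Measure.prod_restrict, Measure.restrict_univ] at hslab

end VanishesOutside

end Support

section TimeIntegration

variable {d : ℕ} {a b t R : ℝ} {f : SpaceTime d → ℝ}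

theorem integral_sub_integral_eq (hab : a < b) (ht : t ∈ Icc a b) (hf : ContDiff ℝ 1 f)
    (hs : VanishesOutside (Icc a b) R f) :
    (∫ x, f (t, x)) - ∫ x, f (a, x) = ∫ s in a..t, ∫ x, pt f (s, x) := by
  have hpt : Continuous (pt f) := (contDiff_pt (m := 0) hf).continuous
  have hint : Integrable (Function.uncurry fun s x => pt f (s, x))
      ((volume.restrict (uIoc a t)).prod volume) := by
    rw [uIoc_of_le ht.1, restrict_Ioc_eq_restrict_Icc]
    have hpt_supp := hs.pt (uniqueDiffOn_Icc hab)
    exact VanishesOutside.integrable_prod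
      (fun r hr x hx => hpt_supp r ⟨hr.1, hr.2.trans ht.2⟩ x hx) hpt
  rw [intervalIntegral_integral_swap hint, ← integral_sub (hs.integrable hf.continuous ht)
    (hs.integrable hf.continuous (left_mem_Icc.2 hab.le))]
  congr 1 with x
  exact (intervalIntegral.integral_eq_sub_of_hasDerivAt
    (fun s _ => hasDerivAt_timeSlice (hf.differentiable one_ne_zero (s, x)))
    ((hpt.comp (.prodMk_left x)).intervalIntegrable _ _)).symm

theorem integral_le_exp_mul_integral {K : ℝ} (hab : a < b) (ht : t ∈ Icc a b)
    (hf : ContDiff ℝ 1 f) (hs : VanishesOutside (Icc a b) R f)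
    (h : ∀ s ∈ Icc a b, ∫ x, pt f (s, x) ≤ K * ∫ x, f (s, x)) :
    ∫ x, f (t, x) ≤ Real.exp (K * (t - a)) * ∫ x, f (a, x) := by
  -- The weight `w` turns the differential inequality into `d/dt ∫ w f ≤ 0`.
  let w : SpaceTime d → ℝ := fun p => Real.exp (-(K * (p.1 - a)))
  have hw : ContDiff ℝ 1 w := by fun_prop
  have hpt (p : SpaceTime d) : pt (fun q => w q * f q) p = w p * (pt f p - K * f p) := by
    have hptw : pt w p = -K * w p := by
      have hexp := (((hasDerivAt_id p.1).sub_const a).const_mul K).neg.exp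
      exact (hasDerivAt_timeSlice (hw.differentiable one_ne_zero p)).unique
        (by simpa [w, mul_comm] using hexp)
    refine (fderiv_mul_apply (hw.differentiable one_ne_zero p)
      (hf.differentiable one_ne_zero p) _).trans ?_
    change pt w p * f p + w p * pt f p = _
    rw [hptw]
    ring
  have hdecay : ∫ s in a..t, ∫ x, pt (fun q => w q * f q) (s, x) ≤ 0 := by
    rw [← neg_nonneg, ← intervalIntegral.integral_neg]
    refine intervalIntegral.integral_nonneg ht.1 fun s hst => ?_
    have hsab : s ∈ Icc a b := ⟨hst.1, hst.2.trans ht.2⟩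
    have hint := (hs.pt (uniqueDiffOn_Icc hab)).integrable
      (contDiff_pt (m := 0) hf).continuous hsab
    simp only [hpt, w, integral_const_mul]
    rw [integral_sub hint ((hs.integrable hf.continuous hsab).const_mul K), integral_const_mul]
    nlinarith [h s hsab, Real.exp_pos (-(K * (s - a)))]
  rw [← integral_sub_integral_eq hab ht (hw.mul hf) (hs.mul_left w)] at hdecay
  simp only [w, integral_const_mul, sub_self, mul_zero, Real.exp_neg, Real.exp_zero,
    inv_one, one_mul, sub_nonpos] at hdecay
  rwa [inv_mul_le_iff₀ (Real.exp_pos _)] at hdecay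

end TimeIntegration

section ZeroMean

/-- The integrable functions with vanishing integral. An integration by parts is recorded as a
membership in this submodule, so that several of them can be combined linearly. -/
def zeroMean {α : Type*} [MeasurableSpace α] (μ : Measure α) : Submodule ℝ (α → ℝ) where
  carrier := {f | Integrable f μ ∧ ∫ x, f x ∂μ = 0}
  add_mem' {f g} hf hg := ⟨hf.1.add hg.1, by
    simp only [Pi.add_apply, integral_add hf.1 hg.1, hf.2, hg.2, add_zero]⟩
  zero_mem' := ⟨integrable_zero _ _ _, integral_zero _ _⟩
  smul_mem' k f hf := ⟨hf.1.smul k, by simp only [Pi.smul_apply, integral_smul, hf.2, smul_zero]⟩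

theorem zeroMean_sum {α ι : Type*} [MeasurableSpace α] [Fintype ι] {μ : Measure α}
    {F : ι → α → ℝ} (hF : ∀ i, F i ∈ zeroMean μ) : (fun x => ∑ i, F i x) ∈ zeroMean μ := by
  simpa only [Finset.sum_fn] using Submodule.sum_mem _ fun i _ => hF i

theorem integral_le_of_le_add_zeroMean {α : Type*} [MeasurableSpace α] {μ : Measure α}
    {f g z : α → ℝ} (hf : Integrable f μ) (hg : Integrable g μ) (hz : z ∈ zeroMean μ)
    (h : ∀ x, f x ≤ g x + z x) : ∫ x, f x ∂μ ≤ ∫ x, g x ∂μ := by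
  have hmono := integral_mono hf (hg.add hz.1) h
  rwa [integral_add' hg hz.1, hz.2, add_zero] at hmono

variable {d : ℕ} {J : Set ℝ} {R s : ℝ} {f g : SpaceTime d → ℝ} {u : SpaceTime d → Fin d → ℝ}

theorem zeroMean_px_mul_add_mul_px (hf : ContDiff ℝ 1 f) (hg : ContDiff ℝ 1 g)
    (hs : VanishesOutside J R f) (hsJ : s ∈ J) (γ : Fin d) :
    (fun x => px γ f (s, x) * g (s, x) + f (s, x) * px γ g (s, x)) ∈ zeroMean volume := by
  have hpxf : Continuous (px γ f) := (contDiff_px (m := 0) hf γ).continuous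
  have hpxg : Continuous (px γ g) := (contDiff_px (m := 0) hg γ).continuous
  have hfg := (hs.mul_right g).integrable (hf.continuous.mul hg.continuous) hsJ
  have hpf := ((hs.px γ).mul_right g).integrable (hpxf.mul hg.continuous) hsJ
  have hpg := (hs.mul_right (px γ g)).integrable (hf.continuous.mul hpxg) hsJ
  have hf' (x : Fin d → ℝ) := hasFDerivAt_slice (hf.differentiable one_ne_zero (s, x))
  have hg' (x : Fin d → ℝ) := hasFDerivAt_slice (hg.differentiable one_ne_zero (s, x))
  have hslice_f (x : Fin d → ℝ) :
      fderiv ℝ (fun y => f (s, y)) x (Pi.single γ 1) = px γ f (s, x) := congr($((hf' x).fderiv) _)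
  have hslice_g (x : Fin d → ℝ) :
      fderiv ℝ (fun y => g (s, y)) x (Pi.single γ 1) = px γ g (s, x) := congr($((hg' x).fderiv) _)
  have hparts := integral_mul_fderiv_eq_neg_fderiv_mul_of_integrable (μ := volume)
    (f := fun x => f (s, x)) (g := fun x => g (s, x)) (v := Pi.single γ 1)
    (by simpa only [hslice_f] using hpf) (by simpa only [hslice_g] using hpg) hfg
    (fun x _ => (hf' x).differentiableAt) (fun x _ => (hg' x).differentiableAt)
  simp only [hslice_f, hslice_g] at hparts
  exact ⟨hpf.add hpg, by rw [integral_add hpf hpg, hparts, add_neg_cancel]⟩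

theorem zeroMean_mul_lap_add_gradDot (hf : ContDiff ℝ 1 f) (hg : ContDiff ℝ 2 g)
    (hs : VanishesOutside J R f) (hsJ : s ∈ J) :
    (fun x => f (s, x) * lap g (s, x) + gradDot f g (s, x)) ∈ zeroMean volume := by
  convert zeroMean_sum fun γ => zeroMean_px_mul_add_mul_px hf (contDiff_px hg γ) hs hsJ γ using 2
    with x
  simp only [lap, gradDot, Finset.mul_sum, Finset.sum_add_distrib]
  ring

theorem zeroMean_advect (hu : ContDiff ℝ 1 u) (hf : ContDiff ℝ 1 f)
    (hs : VanishesOutside J R u) (hsJ : s ∈ J) (hdiv : ∀ x, DivFree u (s, x)) :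
    (fun x => advect u f (s, x)) ∈ zeroMean volume := by
  convert zeroMean_sum fun γ => zeroMean_px_mul_add_mul_px (contDiff_pi.1 hu γ) hf
    (hs.map (φ := fun v => v γ) rfl) hsJ γ using 2 with x
  simp only [Finset.sum_add_distrib, ← Finset.sum_mul]
  rw [show ∑ γ, px γ (fun q => u q γ) (s, x) = 0 from hdiv x, zero_mul, zero_add, advect]

theorem zeroMean_mul_advect (hu : ContDiff ℝ 1 u) (hf : ContDiff ℝ 1 f)
    (hs : VanishesOutside J R u) (hsJ : s ∈ J) (hdiv : ∀ x, DivFree u (s, x)) :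
    (fun x => f (s, x) * advect u f (s, x)) ∈ zeroMean volume := by
  convert (zeroMean volume).smul_mem (1 / 2)
    (zeroMean_advect hu (hf.pow 2) hs hsJ hdiv) using 1
  ext x
  rw [Pi.smul_apply, smul_eq_mul, ← fderiv_advection u (fun p => f p ^ 2),
    fderiv_pow_apply (hf.differentiable one_ne_zero _), fderiv_advection]
  ring

theorem zeroMean_pt_gradDot_self (hf : ContDiff ℝ 2 f) (hpt : ContDiff ℝ 1 (pt f))
    (hs : VanishesOutside J R f) (hJ : UniqueDiffOn ℝ J) (hsJ : s ∈ J) :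
    (fun x => pt (gradDot f f) (s, x) + 2 * (lap f (s, x) * pt f (s, x))) ∈ zeroMean volume := by
  convert (zeroMean volume).smul_mem 2
    (zeroMean_mul_lap_add_gradDot hpt hf (hs.pt hJ) hsJ) using 1
  ext x
  have hpx (γ : Fin d) := (contDiff_px (m := 1) hf γ).differentiable one_ne_zero (s, x)
  have hsq : gradDot f f = fun q => ∑ γ, px γ f q ^ 2 := by ext q; simp only [gradDot, sq]
  rw [hsq, pt, fderiv_sum_sq_apply hpx, Pi.smul_apply, smul_eq_mul, gradDot, mul_add,
    add_comm (2 * _), mul_comm (lap f _)]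
  congr 3 with γ
  rw [← pt_px_comm hf, mul_comm, pt]

/-- The power `∂_β u_α (∂_α f ∂_β f)` of the stress `∇f ⊗ ∇f` against `∇u`. -/
noncomputable def gradStressPower (u : SpaceTime d → Fin d → ℝ) (f : SpaceTime d → ℝ)
    (p : SpaceTime d) : ℝ :=
  ∑ α, ∑ β, px β (fun q => u q α) p * (px α f p * px β f p)

theorem zeroMean_lap_mul_advect (hu : ContDiff ℝ 1 u) (hf : ContDiff ℝ 2 f)
    (hs : VanishesOutside J R u) (hsJ : s ∈ J) (hdiv : ∀ x, DivFree u (s, x)) :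
    (fun x => lap f (s, x) * advect u f (s, x) + gradStressPower u f (s, x))
      ∈ zeroMean volume := by
  have hadv : VanishesOutside J R (advect u f) :=
    .sum fun γ => (hs.map (φ := fun v => v γ) rfl).mul_right (px γ f)
  have hgreen := zeroMean_mul_lap_add_gradDot (contDiff_advect hu hf) hf hadv hsJ
  have htransport := zeroMean_sum fun γ =>
    zeroMean_mul_advect hu (contDiff_px hf γ) hs hsJ hdiv
  convert (zeroMean volume).sub_mem hgreen htransport using 1
  ext x
  simp only [Pi.sub_apply, gradDot, gradStressPower, px_advect hu hf, add_mul,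
    Finset.sum_add_distrib, Finset.sum_mul, mul_comm (px _ f _) (advect u _ _)]
  rw [Finset.sum_comm, mul_comm, add_sub_assoc, add_sub_cancel_right]
  simp only [mul_assoc]

end ZeroMean

section Tensor

/-- The square `|q|²` of the Frobenius norm. -/
def normSq {ι : Type*} [Fintype ι] (q : ι → ι → ℝ) : ℝ := ∑ i : ι × ι, q i.1 i.2 ^ 2

/-- The commutator `vw − wv` of two matrices. -/
def commutator {ι : Type*} [Fintype ι] (v w : ι → ι → ℝ) (i : ι × ι) : ℝ :=
  ∑ γ, (v i.1 γ * w γ i.2 - w i.1 γ * v γ i.2)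

section General

variable {ι : Type*} [Fintype ι]

theorem normSq_nonneg (q : ι → ι → ℝ) : 0 ≤ normSq q :=
  Finset.sum_nonneg fun _ _ => sq_nonneg _

theorem commutator_self (q : ι → ι → ℝ) (i : ι × ι) : commutator q q i = 0 := by
  simp only [commutator, sub_self, Finset.sum_const_zero]

theorem commutator_antisymm {v w : ι → ι → ℝ} (hv : ∀ α β, v α β = v β α)
    (hw : ∀ α β, w α β = w β α) (α β : ι) : commutator v w (α, β) = -commutator v w (β, α) := by
  simp only [commutator, ← Finset.sum_neg_distrib]
  refine Finset.sum_congr rfl fun γ _ => ?_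
  rw [hv α γ, hw γ β, hw α γ, hv γ β]
  ring

theorem sum_mul_commutator {q : ι → ι → ℝ} (hq : ∀ α β, q α β = q β α) (l w : ι → ι → ℝ) :
    ∑ i : ι × ι, l i.1 i.2 * commutator w q i = -∑ i : ι × ι, w i.1 i.2 * commutator q l i := by
  have hleft : ∑ α, ∑ β, ∑ γ, l α β * (w α γ * q γ β)
      = ∑ α, ∑ β, ∑ γ, w α β * (l α γ * q γ β) := by
    refine Finset.sum_congr rfl fun α _ => Finset.sum_comm.trans ?_
    refine Finset.sum_congr rfl fun β _ => Finset.sum_congr rfl fun γ _ => ?_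
    rw [hq β γ, mul_left_comm]
  have hright : ∑ α, ∑ β, ∑ γ, l α β * (q α γ * w γ β)
      = ∑ α, ∑ β, ∑ γ, w α β * (q α γ * l γ β) := by
    have hswap (F : ι → ι → ι → ℝ) : ∑ α, ∑ β, ∑ γ, F α β γ = ∑ α, ∑ β, ∑ γ, F γ β α := by
      rw [Finset.sum_comm, Finset.sum_congr rfl fun _ _ => Finset.sum_comm, Finset.sum_comm]
    rw [hswap]
    refine Finset.sum_congr rfl fun α _ => Finset.sum_congr rfl fun β _ =>
      Finset.sum_congr rfl fun γ _ => ?_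
    rw [hq γ α]
    ring
  simp only [Fintype.sum_prod_type, commutator, Finset.sum_sub_distrib, Finset.mul_sum, mul_sub,
    hleft, hright, neg_sub]

theorem sum_matrixSq_sq_le (q : ι → ι → ℝ) :
    ∑ i : ι × ι, (∑ γ, q i.1 γ * q γ i.2) ^ 2 ≤ normSq q ^ 2 := by
  calc ∑ i : ι × ι, (∑ γ, q i.1 γ * q γ i.2) ^ 2
      ≤ ∑ i : ι × ι, (∑ γ, q i.1 γ ^ 2) * ∑ γ, q γ i.2 ^ 2 :=
        Finset.sum_le_sum fun i _ => Finset.sum_mul_sq_le_sq_mul_sq _ _ _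
    _ = normSq q ^ 2 := by
        rw [Fintype.sum_prod_type' fun α β => (∑ γ, q α γ ^ 2) * ∑ γ, q γ β ^ 2,
          ← Finset.sum_mul_sum, sq, normSq, ← Fintype.sum_prod_type' fun α β => q α β ^ 2,
          ← Fintype.sum_prod_type_right' fun α β => q α β ^ 2]

end General

variable {q : Fin 3 → Fin 3 → ℝ}

/-- The tensor `q² − (|q|²/3) Id`, trace-free when `q` is symmetric. -/
noncomputable def deviatoricSq (q : Fin 3 → Fin 3 → ℝ) (i : Fin 3 × Fin 3) : ℝ :=
  ∑ γ, q i.1 γ * q γ i.2 - kron i.1 i.2 / 3 * normSq q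

/-- The part `−a q + b (q² − (|q|²/3) Id) − c |q|² q` of the molecular field without derivatives. -/
noncomputable def bulkField (a b c : ℝ) (q : Fin 3 → Fin 3 → ℝ) (i : Fin 3 × Fin 3) : ℝ :=
  -a * q i.1 i.2 + b * deviatoricSq q i - c * q i.1 i.2 * normSq q

theorem sum_deviatoricSq_sq_le (hq : ∀ α β, q α β = q β α) :
    ∑ i, deviatoricSq q i ^ 2 ≤ normSq q ^ 2 := by
  have htrace : ∑ i : Fin 3 × Fin 3, kron i.1 i.2 * ∑ γ, q i.1 γ * q γ i.2 = normSq q := by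
    simp [normSq, Fintype.sum_prod_type, kron, sq, hq]
  have hkron : ∑ i : Fin 3 × Fin 3, kron i.1 i.2 ^ 2 = 3 := by
    rw [Fintype.sum_prod_type]
    simp [kron]
  have hexpand : ∑ i, deviatoricSq q i ^ 2
      = ∑ i : Fin 3 × Fin 3, (∑ γ, q i.1 γ * q γ i.2) ^ 2
        - 2 / 3 * normSq q * ∑ i : Fin 3 × Fin 3, kron i.1 i.2 * ∑ γ, q i.1 γ * q γ i.2
        + normSq q ^ 2 / 9 * ∑ i : Fin 3 × Fin 3, kron i.1 i.2 ^ 2 := by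
    simp only [Finset.mul_sum (s := (Finset.univ : Finset (Fin 3 × Fin 3))),
      ← Finset.sum_sub_distrib, ← Finset.sum_add_distrib, deviatoricSq]
    exact Finset.sum_congr rfl fun i _ => by ring
  rw [hexpand, htrace, hkron]
  nlinarith [sum_matrixSq_sq_le q, sq_nonneg (normSq q)]

theorem sum_mul_bulkField_le {c : ℝ} (a b : ℝ) (hc : 0 < c) (hq : ∀ α β, q α β = q β α) :
    ∑ i : Fin 3 × Fin 3, q i.1 i.2 * bulkField a b c q i
      ≤ (|a| + b ^ 2 / (4 * c)) * normSq q := by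
  set X := ∑ i : Fin 3 × Fin 3, q i.1 i.2 * deviatoricSq q i
  have hN := normSq_nonneg q
  have hexpand : ∑ i : Fin 3 × Fin 3, q i.1 i.2 * bulkField a b c q i
      = -a * normSq q + b * X - c * normSq q * normSq q := by
    have hterm (i : Fin 3 × Fin 3) : q i.1 i.2 * bulkField a b c q i
        = -a * q i.1 i.2 ^ 2 + b * (q i.1 i.2 * deviatoricSq q i)
          - c * normSq q * q i.1 i.2 ^ 2 := by rw [bulkField]; ring
    rw [Finset.sum_congr rfl fun i _ => hterm i, Finset.sum_sub_distrib, Finset.sum_add_distrib,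
      ← Finset.mul_sum, ← Finset.mul_sum, ← Finset.mul_sum]
    rfl
  have hX_sq : X ^ 2 ≤ normSq q ^ 3 := by
    calc X ^ 2 ≤ normSq q * ∑ i, deviatoricSq q i ^ 2 := Finset.sum_mul_sq_le_sq_mul_sq _ _ _
      _ ≤ normSq q * normSq q ^ 2 := by gcongr; exact sum_deviatoricSq_sq_le hq
      _ = normSq q ^ 3 := by ring
  have hcubic : b * X ≤ c * normSq q ^ 2 + b ^ 2 / (4 * c) * normSq q := by
    refine abs_le_of_sq_le_sq' ?_ (by positivity) |>.2
    calc (b * X) ^ 2 ≤ b ^ 2 * normSq q ^ 3 := by rw [mul_pow]; gcongr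
      _ = 4 * (c * normSq q ^ 2) * (b ^ 2 / (4 * c) * normSq q) := by field_simp
      _ ≤ (c * normSq q ^ 2 + b ^ 2 / (4 * c) * normSq q) ^ 2 := four_mul_le_sq_add _ _
  rw [hexpand]
  nlinarith [mul_le_mul_of_nonneg_right (neg_le_abs a) hN]

theorem sum_bulkField_sq_le (a b c : ℝ) (hq : ∀ α β, q α β = q β α) :
    ∑ i, bulkField a b c q i ^ 2 ≤ 3 * (a ^ 2 + b ^ 2 + c ^ 2) * (normSq q + normSq q ^ 3) := by
  have hN := normSq_nonneg q
  have hterm (i : Fin 3 × Fin 3) : bulkField a b c q i ^ 2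
      ≤ 3 * ((a ^ 2 + c ^ 2 * normSq q ^ 2) * q i.1 i.2 ^ 2 + b ^ 2 * deviatoricSq q i ^ 2) := by
    rw [bulkField]
    nlinarith [sq_nonneg (a * q i.1 i.2 + b * deviatoricSq q i),
      sq_nonneg (a * q i.1 i.2 - c * q i.1 i.2 * normSq q),
      sq_nonneg (b * deviatoricSq q i + c * q i.1 i.2 * normSq q)]
  have hsq : normSq q ^ 2 ≤ normSq q + normSq q ^ 3 := by
    nlinarith [mul_nonneg hN (sq_nonneg (normSq q - 1))]
  calc ∑ i, bulkField a b c q i ^ 2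
      ≤ 3 * ((a ^ 2 + c ^ 2 * normSq q ^ 2) * normSq q + b ^ 2 * ∑ i, deviatoricSq q i ^ 2) := by
        rw [normSq, Finset.mul_sum, Finset.mul_sum, ← Finset.sum_add_distrib, Finset.mul_sum]
        exact Finset.sum_le_sum fun i _ => hterm i
    _ ≤ 3 * ((a ^ 2 + c ^ 2 * normSq q ^ 2) * normSq q + b ^ 2 * normSq q ^ 2) := by
        gcongr
        exact sum_deviatoricSq_sq_le hq
    _ ≤ 3 * (a ^ 2 + b ^ 2 + c ^ 2) * (normSq q + normSq q ^ 3) := by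
        nlinarith [mul_le_mul_of_nonneg_left hsq (sq_nonneg b), mul_nonneg (sq_nonneg c) hN,
          mul_nonneg (sq_nonneg a) (pow_nonneg hN 3)]

theorem sum_px_mul_eq_sum_vort3_mul {d : ℕ} (hd : d ≤ 3) (u : SpaceTime d → Fin d → ℝ)
    (p : SpaceTime d) {A : Fin 3 → Fin 3 → ℝ} (hA : ∀ α β, A α β = -A β α) :
    ∑ α, ∑ β, px β (fun q => u q α) p * A (e3 α) (e3 β)
      = ∑ i : Fin 3 × Fin 3, vort3 u p i.1 i.2 * A i.1 i.2 := by
  have hdiag (α : Fin 3) : A α α = 0 := by linarith [hA α α]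
  interval_cases d <;>
    simp [Fintype.sum_prod_type, Fin.sum_univ_succ, vort3, e3, hdiag, hA 1 0, hA 2 0, hA 2 1] <;>
    ring

end Tensor

section TensorField

variable {d : ℕ} {ι : Type*} {Q : SpaceTime d → ι → ι → ℝ}

/-- The scalar field `Q_{αβ}` of a tensor field, indexed by the pair `(α, β)`. -/
def entry (Q : SpaceTime d → ι → ι → ℝ) (i : ι × ι) : SpaceTime d → ℝ := fun p => Q p i.1 i.2

/-- The tensor `ΔQ`. -/
noncomputable def lapTensor (Q : SpaceTime d → ι → ι → ℝ) (p : SpaceTime d) (α β : ι) : ℝ :=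
  lap (fun q => Q q α β) p

theorem lapTensor_symm (hQ : ∀ p α β, Q p α β = Q p β α) (p : SpaceTime d) (α β : ι) :
    lapTensor Q p α β = lapTensor Q p β α := by
  simp only [lapTensor, hQ _ α β]

variable [Fintype ι] {p : SpaceTime d}

theorem contDiff_entry {n : WithTop ℕ∞} (hQ : ContDiff ℝ n Q) (i : ι × ι) :
    ContDiff ℝ n (entry Q i) :=
  contDiff_pi.1 (contDiff_pi.1 hQ i.1) i.2

theorem contDiff_normSq {n : WithTop ℕ∞} (hQ : ContDiff ℝ n Q) :
    ContDiff ℝ n (fun p => normSq (Q p)) :=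
  ContDiff.sum fun i _ => (contDiff_entry hQ i).pow 2

theorem fderiv_normSq_pow_apply (hQ : ∀ i, DifferentiableAt ℝ (entry Q i) p) (n : ℕ)
    (v : SpaceTime d) :
    fderiv ℝ (fun q => normSq (Q q) ^ n) p v
      = n * normSq (Q p) ^ (n - 1) * (2 * ∑ i, entry Q i p * fderiv ℝ (entry Q i) p v) := by
  have hN : DifferentiableAt ℝ (fun q => normSq (Q q)) p :=
    .fun_sum fun i _ => (hQ i).fun_pow 2
  rw [fderiv_pow_apply hN]
  exact congrArg _ (fderiv_sum_sq_apply hQ v)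

theorem sum_gradDot_normSq_pow_mul_nonneg (hQ : ∀ i, DifferentiableAt ℝ (entry Q i) p) (k : ℕ) :
    0 ≤ ∑ i, gradDot (fun q => normSq (Q q) ^ k * entry Q i q) (entry Q i) p := by
  have hN := normSq_nonneg (Q p)
  have hpow : DifferentiableAt ℝ (fun q => normSq (Q q) ^ k) p :=
    (DifferentiableAt.fun_sum fun i _ => (hQ i).fun_pow 2).fun_pow k
  simp only [gradDot]
  rw [Finset.sum_comm]
  refine Finset.sum_nonneg fun γ _ => ?_
  calc 0 ≤ 2 * (k * normSq (Q p) ^ (k - 1)) * (∑ i, entry Q i p * px γ (entry Q i) p) ^ 2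
        + normSq (Q p) ^ k * ∑ i, px γ (entry Q i) p ^ 2 := by positivity
    _ = px γ (fun q => normSq (Q q) ^ k) p * ∑ i, entry Q i p * px γ (entry Q i) p
        + normSq (Q p) ^ k * ∑ i, px γ (entry Q i) p ^ 2 := by
      rw [px, fderiv_normSq_pow_apply hQ]
      simp only [px]
      ring
    _ = ∑ i, px γ (fun q => normSq (Q q) ^ k * entry Q i q) p * px γ (entry Q i) p := by
      rw [Finset.mul_sum, Finset.mul_sum, ← Finset.sum_add_distrib]
      refine Finset.sum_congr rfl fun i _ => ?_
      rw [px, px, px, fderiv_mul_apply hpow (hQ i)]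
      ring

end TensorField

section Stress

variable {d : ℕ} {Q : SpaceTime d → Fin 3 → Fin 3 → ℝ}

theorem trQ2_eq_normSq {p : SpaceTime d} (hQ : ∀ α β, Q p α β = Q p β α) :
    trQ2 Q p = normSq (Q p) := by
  rw [normSq, Fintype.sum_prod_type]
  exact Finset.sum_congr rfl fun α _ => Finset.sum_congr rfl fun β _ => by rw [hQ β α, sq]

/-- The trace-corrected Ericksen stress `∂_α Q : ∂_β Q − (δ_{αβ}/d) |∇Q|²`. -/
noncomputable def ericksenStress (Q : SpaceTime d → Fin 3 → Fin 3 → ℝ) (α β : Fin d)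
    (p : SpaceTime d) : ℝ :=
  ∑ ζ, ∑ δ, px α (fun r => Q r ζ δ) p * px β (fun r => Q r ζ δ) p
    - kron α β / d * gradQsq Q p

/-- The antisymmetric stress `QΔQ − ΔQ Q`. -/
noncomputable def rotationalStress (Q : SpaceTime d → Fin 3 → Fin 3 → ℝ) (i : Fin 3 × Fin 3)
    (p : SpaceTime d) : ℝ :=
  commutator (Q p) (lapTensor Q p) i

theorem gradQsq_eq_sum_gradDot (Q : SpaceTime d → Fin 3 → Fin 3 → ℝ) :
    gradQsq Q = fun p => ∑ i, gradDot (entry Q i) (entry Q i) p := by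
  ext p
  simp only [gradQsq, gradDot, ← sq]
  rw [Finset.sum_comm (s := (Finset.univ : Finset (Fin 3 × Fin 3)))]
  exact Finset.sum_congr rfl fun γ _ => (Fintype.sum_prod_type' _).symm

theorem sum_px_mul_ericksenStress {u : SpaceTime d → Fin d → ℝ} {p : SpaceTime d}
    (Q : SpaceTime d → Fin 3 → Fin 3 → ℝ) (hdiv : DivFree u p) :
    ∑ α, ∑ β, px β (fun q => u q α) p * ericksenStress Q α β p
      = ∑ i, gradStressPower u (entry Q i) p := by
  have htrace : ∑ α, ∑ β, px β (fun q => u q α) p * (kron α β / d * gradQsq Q p) = 0 := by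
    have hkron : ∑ α, ∑ β, px β (fun q => u q α) p * (kron α β / d * gradQsq Q p)
        = (∑ α, px α (fun q => u q α) p) * (gradQsq Q p / d) := by
      simp [kron, Finset.sum_mul, ite_mul, mul_ite, div_eq_inv_mul]
    rw [hkron, show ∑ α, px α (fun q => u q α) p = 0 from hdiv, zero_mul]
  simp only [ericksenStress, mul_sub, Finset.sum_sub_distrib, htrace, sub_zero, gradStressPower]
  rw [Finset.sum_comm (s := (Finset.univ : Finset (Fin 3 × Fin 3)))]
  refine Finset.sum_congr rfl fun α _ => ?_
  rw [Finset.sum_comm (s := (Finset.univ : Finset (Fin 3 × Fin 3)))]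
  refine Finset.sum_congr rfl fun β _ => ?_
  rw [← Finset.mul_sum, Fintype.sum_prod_type]
  rfl

theorem contDiff_gradQsq (hQ : ContDiff ℝ 2 Q) : ContDiff ℝ 1 (gradQsq Q) := by
  rw [gradQsq_eq_sum_gradDot]
  exact ContDiff.sum fun i _ => contDiff_gradDot (contDiff_entry hQ i) (contDiff_entry hQ i)

theorem contDiff_ericksenStress (hQ : ContDiff ℝ 2 Q) (α β : Fin d) :
    ContDiff ℝ 1 (ericksenStress Q α β) := by
  refine ContDiff.sub (ContDiff.sum fun ζ _ => ContDiff.sum fun δ _ => ?_)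
    (contDiff_const.mul (contDiff_gradQsq hQ))
  exact (contDiff_px (contDiff_entry hQ (ζ, δ)) α).mul (contDiff_px (contDiff_entry hQ (ζ, δ)) β)

theorem contDiff_rotationalStress (hQ : ContDiff ℝ 3 Q) (i : Fin 3 × Fin 3) :
    ContDiff ℝ 1 (rotationalStress Q i) := by
  have hentry (j : Fin 3 × Fin 3) : ContDiff ℝ 1 (entry Q j) :=
    (contDiff_entry hQ j).of_le (by norm_num)
  have hlap (j : Fin 3 × Fin 3) : ContDiff ℝ 1 (lap (entry Q j)) :=
    contDiff_lap (contDiff_entry hQ j)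
  have hterm (γ : Fin 3) := ((hentry (i.1, γ)).mul (hlap (γ, i.2))).sub
    ((hlap (i.1, γ)).mul (hentry (γ, i.2)))
  exact ContDiff.sum (s := .univ) fun γ _ => hterm γ

theorem zeroMean_stress_work {J : Set ℝ} {R s : ℝ} {u : SpaceTime d → Fin d → ℝ}
    {σ : Fin d → Fin d → SpaceTime d → ℝ} (hu : ContDiff ℝ 1 u) (hσ : ∀ α β, ContDiff ℝ 1 (σ α β))
    (hs : VanishesOutside J R u) (hsJ : s ∈ J) :
    (fun x => ∑ α, ∑ β, px β (fun q => u q α) (s, x) * σ α β (s, x)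
      + ∑ α, u (s, x) α * ∑ β, px β (σ α β) (s, x)) ∈ zeroMean volume := by
  convert zeroMean_sum fun α => zeroMean_sum fun β =>
    zeroMean_px_mul_add_mul_px (contDiff_pi.1 hu α) (hσ α β) (hs.map (φ := fun v => v α) rfl) hsJ β
    using 2 with x
  simp only [Finset.sum_add_distrib, Finset.mul_sum]

end Stress

/-- The energy density `|u|² + L|∇Q|²`. -/
noncomputable def energyDensity {d : ℕ} (L : ℝ) (u : SpaceTime d → Fin d → ℝ)
    (Q : SpaceTime d → Fin 3 → Fin 3 → ℝ) (p : SpaceTime d) : ℝ :=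
  ∑ α, u p α ^ 2 + L * gradQsq Q p

/-- The constant of the energy estimate: the cost `3(a² + b² + c²)Γ` of absorbing the bulk field
into the elastic dissipation, plus the growth rate of `‖Q‖_{L⁶}⁶`, plus one for turning the factor
`t` of the time integration into an exponential. -/
noncomputable def energyConstant (a b c Γ : ℝ) : ℝ :=
  3 * (a ^ 2 + b ^ 2 + c ^ 2) * Γ + 6 * Γ * (|a| + b ^ 2 / (4 * c)) + 1

theorem mul_sum_sq_le_add {ι : Type*} [Fintype ι] {k : ℝ} (hk : 0 ≤ k) (r : ℝ) (f g : ι → ℝ) :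
    k * r ^ 2 * ∑ i, f i ^ 2 ≤ 2 * k * r * ∑ i, f i * (r * f i + g i) + k * ∑ i, g i ^ 2 := by
  simp only [Finset.mul_sum, ← Finset.sum_add_distrib]
  refine Finset.sum_le_sum fun i _ => ?_
  linear_combination k * sq_nonneg (r * f i + g i)

theorem mul_mul_exp_le {A K t : ℝ} (hA : 0 ≤ A) (hK : 0 ≤ K) (ht : 0 ≤ t) :
    A * (t * Real.exp (K * t)) ≤ (A + K + 1) * Real.exp ((A + K + 1) * t) := by
  have ht_exp : t ≤ Real.exp t := by linarith [Real.add_one_le_exp t]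
  have hexp : t * Real.exp (K * t) ≤ Real.exp ((A + K + 1) * t) :=
    calc t * Real.exp (K * t) ≤ Real.exp t * Real.exp (K * t) := by gcongr
      _ = Real.exp ((K + 1) * t) := by rw [← Real.exp_add]; ring_nf
      _ ≤ Real.exp ((A + K + 1) * t) := by gcongr; linarith
  exact mul_le_mul (by linarith) hexp (by positivity) (by positivity)

theorem integral_normSq_add_nonneg {d : ℕ} (Q : SpaceTime d → Fin 3 → Fin 3 → ℝ) (s : ℝ) :
    0 ≤ (∫ x, normSq (Q (s, x))) + ∫ x, normSq (Q (s, x)) ^ 3 :=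
  add_nonneg (integral_nonneg fun _ => normSq_nonneg _)
    (integral_nonneg fun _ => pow_nonneg (normSq_nonneg _) 3)

section ClassicalSolution

variable {d : ℕ} {τ R a b c L Γ ν s t : ℝ} {Q : SpaceTime d → Fin 3 → Fin 3 → ℝ}
  {u : SpaceTime d → Fin d → ℝ} {P : SpaceTime d → ℝ}

/-- A classical solution on the slab `[0, τ] × ℝ^d`, with the regularity the energy method
consumes, whose fields `Q` and `u` live in `‖x‖ ≤ R`. -/
structure IsClassicalSolution (τ R a b c L Γ ν : ℝ) (Q : SpaceTime d → Fin 3 → Fin 3 → ℝ)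
    (u : SpaceTime d → Fin d → ℝ) (P : SpaceTime d → ℝ) : Prop where
  pos : 0 < τ
  contDiff_Q : ContDiff ℝ 3 Q
  contDiff_u : ContDiff ℝ 2 u
  contDiff_P : ContDiff ℝ 1 P
  symm : ∀ p α β, Q p α β = Q p β α
  supp_Q : VanishesOutside (Icc 0 τ) R Q
  supp_u : VanishesOutside (Icc 0 τ) R u
  tensorEq : ∀ s ∈ Icc 0 τ, ∀ x, QTensorEq L Γ a b c Q u (s, x)
  momentumEq : ∀ s ∈ Icc 0 τ, ∀ x, MomentumEq L ν Q u P (s, x)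
  divFree : ∀ s ∈ Icc 0 τ, ∀ x, DivFree u (s, x)

namespace IsClassicalSolution

theorem material_entry_eq (h : IsClassicalSolution τ R a b c L Γ ν Q u P) (hs : s ∈ Icc 0 τ)
    (x : Fin d → ℝ) (i : Fin 3 × Fin 3) :
    pt (entry Q i) (s, x) + advect u (entry Q i) (s, x)
      = commutator (vort3 u (s, x)) (Q (s, x)) i
        + Γ * (L * lap (entry Q i) (s, x) + bulkField a b c (Q (s, x)) i) := by
  have htr : trQ2 Q (s, x) = normSq (Q (s, x)) := trQ2_eq_normSq (h.symm (s, x))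
  have heq := h.tensorEq s hs x i.1 i.2
  rw [sub_eq_iff_eq_add', molH, htr] at heq
  refine heq.trans ?_
  rw [commutator, bulkField, deviatoricSq, show entry Q i = fun q => Q q i.1 i.2 from rfl]
  ring

theorem supp_entry (h : IsClassicalSolution τ R a b c L Γ ν Q u P) (i : Fin 3 × Fin 3) :
    VanishesOutside (Icc 0 τ) R (entry Q i) :=
  h.supp_Q.map (φ := fun q => q i.1 i.2) rfl

theorem supp_normSq_pow (h : IsClassicalSolution τ R a b c L Γ ν Q u P) (k : ℕ) :
    VanishesOutside (Icc 0 τ) R (fun p => normSq (Q p) ^ (k + 1)) :=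
  h.supp_Q.map (φ := fun q => normSq q ^ (k + 1)) (by simp [normSq])

theorem pt_normSq_pow_add_advect (h : IsClassicalSolution τ R a b c L Γ ν Q u P)
    (hs : s ∈ Icc 0 τ) (k : ℕ) (x : Fin d → ℝ) :
    pt (fun p => normSq (Q p) ^ (k + 1)) (s, x) + advect u (fun p => normSq (Q p) ^ (k + 1)) (s, x)
      = 2 * (k + 1) * Γ
        * (L * ∑ i, normSq (Q (s, x)) ^ k * entry Q i (s, x) * lap (entry Q i) (s, x)
          + normSq (Q (s, x)) ^ k * ∑ i, entry Q i (s, x) * bulkField a b c (Q (s, x)) i) := by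
  have hQ (i : Fin 3 × Fin 3) : DifferentiableAt ℝ (entry Q i) (s, x) :=
    (contDiff_entry h.contDiff_Q i).differentiable (by norm_num) _
  have hcorotation : ∑ i, entry Q i (s, x) * commutator (vort3 u (s, x)) (Q (s, x)) i = 0 :=
    (sum_mul_commutator (h.symm (s, x)) (Q (s, x)) (vort3 u (s, x))).trans
      (by simp only [commutator_self, mul_zero, Finset.sum_const_zero, neg_zero])
  rw [← fderiv_material, fderiv_normSq_pow_apply hQ]
  simp only [fderiv_material, h.material_entry_eq hs, mul_add, Finset.sum_add_distrib, hcorotation,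
    zero_add, Finset.mul_sum, Nat.add_sub_cancel, Nat.cast_add, Nat.cast_one]
  congr 1 <;> exact Finset.sum_congr rfl fun i _ => by ring

theorem integral_pt_normSq_pow_le (h : IsClassicalSolution τ R a b c L Γ ν Q u P) (hc : 0 < c)
    (hL : 0 ≤ L) (hΓ : 0 ≤ Γ) (hs : s ∈ Icc 0 τ) (k : ℕ) :
    ∫ x, pt (fun p => normSq (Q p) ^ (k + 1)) (s, x)
      ≤ 2 * (k + 1) * Γ * (|a| + b ^ 2 / (4 * c)) * ∫ x, normSq (Q (s, x)) ^ (k + 1) := by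
  have hN : ContDiff ℝ 3 (fun p => normSq (Q p)) := contDiff_normSq h.contDiff_Q
  have hNk : ContDiff ℝ 1 (fun p => normSq (Q p) ^ (k + 1)) := (hN.of_le (by norm_num)).pow _
  have hsupp := h.supp_normSq_pow k
  have hgreen (i : Fin 3 × Fin 3) := zeroMean_mul_lap_add_gradDot (J := Icc 0 τ) (s := s)
    (((hN.pow k).mul (contDiff_entry h.contDiff_Q i)).of_le (by norm_num))
    ((contDiff_entry h.contDiff_Q i).of_le (by norm_num))
    ((h.supp_entry i).mul_left fun p => normSq (Q p) ^ k) hs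
  have hz := (zeroMean volume).sub_mem
    ((zeroMean volume).smul_mem (2 * (k + 1) * Γ * L) (zeroMean_sum hgreen))
    (zeroMean_advect (h.contDiff_u.of_le (by norm_num)) hNk h.supp_u hs (h.divFree s hs))
  rw [← integral_const_mul]
  refine integral_le_of_le_add_zeroMean
    ((hsupp.pt (uniqueDiffOn_Icc h.pos)).integrable (contDiff_pt (m := 0) hNk).continuous hs)
    ((hsupp.integrable hNk.continuous hs).const_mul _) hz fun x => ?_
  have hQ (i : Fin 3 × Fin 3) : DifferentiableAt ℝ (entry Q i) (s, x) :=
    (contDiff_entry h.contDiff_Q i).differentiable (by norm_num) _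
  have hdiff := mul_nonneg (by positivity : 0 ≤ 2 * (k + 1) * Γ * L)
    (sum_gradDot_normSq_pow_mul_nonneg hQ k)
  have hbulk := mul_le_mul_of_nonneg_left (sum_mul_bulkField_le a b hc (h.symm (s, x)))
    (mul_nonneg (by positivity : 0 ≤ 2 * (k + 1) * Γ) (pow_nonneg (normSq_nonneg (Q (s, x))) k))
  have hpt := h.pt_normSq_pow_add_advect hs k x
  simp only [Pi.sub_apply, Pi.smul_apply, smul_eq_mul, Finset.sum_add_distrib]
  simp only [entry] at hpt hbulk hdiff ⊢
  linear_combination hpt + hdiff + hbulk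

theorem integral_normSq_pow_le (h : IsClassicalSolution τ R a b c L Γ ν Q u P) (hc : 0 < c)
    (hL : 0 ≤ L) (hΓ : 0 ≤ Γ) (hs : s ∈ Icc 0 τ) (k : ℕ) :
    ∫ x, normSq (Q (s, x)) ^ (k + 1)
      ≤ Real.exp (2 * (k + 1) * Γ * (|a| + b ^ 2 / (4 * c)) * s)
        * ∫ x, normSq (Q (0, x)) ^ (k + 1) := by
  simpa only [sub_zero] using integral_le_exp_mul_integral h.pos hs
    (((contDiff_normSq h.contDiff_Q).of_le (by norm_num)).pow (k + 1)) (h.supp_normSq_pow k)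
    fun r hr => h.integral_pt_normSq_pow_le hc hL hΓ hr k

theorem sum_velocity_mul_pt_eq (h : IsClassicalSolution τ R a b c L Γ ν Q u P) (hs : s ∈ Icc 0 τ)
    (x : Fin d → ℝ) :
    ∑ α, u (s, x) α * pt (fun q => u q α) (s, x)
      = -∑ α, u (s, x) α * advect u (fun q => u q α) (s, x)
        + ν * ∑ α, u (s, x) α * lap (fun q => u q α) (s, x) + advect u P (s, x)
        - L * ∑ α, u (s, x) α * ∑ β, px β (ericksenStress Q α β) (s, x)
        + L * ∑ α, u (s, x) α * ∑ β, px β (rotationalStress Q (e3 α, e3 β)) (s, x) := by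
  have heq (α : Fin d) : pt (fun q => u q α) (s, x) + advect u (fun q => u q α) (s, x)
      = ν * lap (fun q => u q α) (s, x) + px α P (s, x)
        - L * ∑ β, px β (ericksenStress Q α β) (s, x)
        + L * ∑ β, px β (rotationalStress Q (e3 α, e3 β)) (s, x) := h.momentumEq s hs x α
  simp only [eq_sub_of_add_eq (heq _), advect, mul_add, mul_sub, Finset.sum_add_distrib,
    Finset.sum_sub_distrib, mul_left_comm _ ν, mul_left_comm _ L, ← Finset.mul_sum]
  ring

theorem zeroMean_kinetic_balance (h : IsClassicalSolution τ R a b c L Γ ν Q u P) (hd : d ≤ 3)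
    (hs : s ∈ Icc 0 τ) :
    (fun x => pt (fun p => ∑ α, u p α ^ 2) (s, x)
      + 2 * ν * ∑ α, gradDot (fun q => u q α) (fun q => u q α) (s, x)
      - 2 * L * ∑ i, gradStressPower u (entry Q i) (s, x)
      + 2 * L * ∑ i : Fin 3 × Fin 3, vort3 u (s, x) i.1 i.2 * rotationalStress Q i (s, x))
      ∈ zeroMean volume := by
  have hu : ContDiff ℝ 1 u := h.contDiff_u.of_le (by norm_num)
  have hucomp (α : Fin d) : ContDiff ℝ 1 (fun q => u q α) := contDiff_pi.1 hu α
  have hinertia := zeroMean_sum fun α =>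
    zeroMean_mul_advect hu (hucomp α) h.supp_u hs (h.divFree s hs)
  have hviscous := zeroMean_sum fun α => zeroMean_mul_lap_add_gradDot (hucomp α)
    (contDiff_pi.1 h.contDiff_u α) (h.supp_u.map (φ := fun v => v α) rfl) hs
  have hpressure := zeroMean_advect hu h.contDiff_P h.supp_u hs (h.divFree s hs)
  have hericksen := zeroMean_stress_work hu
    (contDiff_ericksenStress (h.contDiff_Q.of_le (by norm_num))) h.supp_u hs
  have hrotational := zeroMean_stress_work (σ := fun α β => rotationalStress Q (e3 α, e3 β)) hu
    (fun α β => contDiff_rotationalStress h.contDiff_Q _) h.supp_u hs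
  convert (zeroMean volume).add_mem ((zeroMean volume).sub_mem ((zeroMean volume).add_mem
    ((zeroMean volume).sub_mem ((zeroMean volume).smul_mem (2 * ν) hviscous)
      ((zeroMean volume).smul_mem 2 hinertia)) ((zeroMean volume).smul_mem 2 hpressure))
    ((zeroMean volume).smul_mem (2 * L) hericksen))
    ((zeroMean volume).smul_mem (2 * L) hrotational) using 1
  ext x
  have hpt : pt (fun p => ∑ α, u p α ^ 2) (s, x)
      = 2 * ∑ α, u (s, x) α * pt (fun q => u q α) (s, x) :=
    fderiv_sum_sq_apply (fun α => (hucomp α).differentiable one_ne_zero _) _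
  have hanti (α β : Fin 3) :
      rotationalStress Q (α, β) (s, x) = -rotationalStress Q (β, α) (s, x) :=
    commutator_antisymm (h.symm _) (lapTensor_symm h.symm _) α β
  have hrot :=
    sum_px_mul_eq_sum_vort3_mul hd u (s, x) (A := fun α β => rotationalStress Q (α, β) (s, x)) hanti
  simp only [Pi.add_apply, Pi.sub_apply, Pi.smul_apply, smul_eq_mul, hpt, hrot,
    h.sum_velocity_mul_pt_eq hs, sum_px_mul_ericksenStress Q (h.divFree s hs x),
    Finset.sum_add_distrib]
  ring

theorem zeroMean_elastic_balance (h : IsClassicalSolution τ R a b c L Γ ν Q u P)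
    (hs : s ∈ Icc 0 τ) :
    (fun x => pt (gradQsq Q) (s, x) + 2 * ∑ i, gradStressPower u (entry Q i) (s, x)
      - 2 * ∑ i : Fin 3 × Fin 3, vort3 u (s, x) i.1 i.2 * rotationalStress Q i (s, x)
      + 2 * Γ * ∑ i, lap (entry Q i) (s, x)
        * (L * lap (entry Q i) (s, x) + bulkField a b c (Q (s, x)) i)) ∈ zeroMean volume := by
  have hQ (i : Fin 3 × Fin 3) : ContDiff ℝ 3 (entry Q i) := contDiff_entry h.contDiff_Q i
  have hstorage := zeroMean_sum fun i => zeroMean_pt_gradDot_self ((hQ i).of_le (by norm_num))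
    (contDiff_pt (hQ i)) (h.supp_entry i) (uniqueDiffOn_Icc h.pos) hs
  have hadvect := zeroMean_sum fun i => zeroMean_lap_mul_advect (h.contDiff_u.of_le (by norm_num))
    ((hQ i).of_le (by norm_num)) h.supp_u hs (h.divFree s hs)
  convert (zeroMean volume).add_mem hstorage ((zeroMean volume).smul_mem 2 hadvect) using 1
  ext x
  have hpt : pt (gradQsq Q) (s, x) = ∑ i, pt (gradDot (entry Q i) (entry Q i)) (s, x) := by
    rw [gradQsq_eq_sum_gradDot]
    exact fderiv_sum_apply (fun i =>
      (contDiff_gradDot (m := 2) (hQ i) (hQ i)).differentiable two_ne_zero _) _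
  have hwork : ∑ i, lap (entry Q i) (s, x) * pt (entry Q i) (s, x)
        + ∑ i, lap (entry Q i) (s, x) * advect u (entry Q i) (s, x)
      = -∑ i : Fin 3 × Fin 3, vort3 u (s, x) i.1 i.2 * rotationalStress Q i (s, x)
        + Γ * ∑ i, lap (entry Q i) (s, x)
          * (L * lap (entry Q i) (s, x) + bulkField a b c (Q (s, x)) i) := by
    refine Eq.trans ?_ (congrArg (· + _)
      (sum_mul_commutator (h.symm (s, x)) (lapTensor Q (s, x)) (vort3 u (s, x))))
    simp only [← Finset.sum_add_distrib, ← mul_add, h.material_entry_eq hs, Finset.mul_sum,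
      mul_left_comm Γ]
    exact Finset.sum_congr rfl fun i _ => mul_add _ _ _
  simp only [Pi.add_apply, Pi.smul_apply, smul_eq_mul, hpt, Finset.sum_add_distrib,
    ← Finset.mul_sum]
  linear_combination -2 * hwork

theorem contDiff_speedSq (h : IsClassicalSolution τ R a b c L Γ ν Q u P) :
    ContDiff ℝ 1 (fun p => ∑ α, u p α ^ 2) :=
  ContDiff.sum fun α _ => ((contDiff_pi.1 h.contDiff_u α).of_le (by norm_num)).pow 2

theorem contDiff_energyDensity (h : IsClassicalSolution τ R a b c L Γ ν Q u P) :
    ContDiff ℝ 1 (energyDensity L u Q) :=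
  h.contDiff_speedSq.add
    (contDiff_const.mul (contDiff_gradQsq (h.contDiff_Q.of_le (by norm_num))))

theorem continuous_gradVelocitySq (h : IsClassicalSolution τ R a b c L Γ ν Q u P) :
    Continuous (fun p => ∑ α, gradDot (fun q => u q α) (fun q => u q α) p) :=
  continuous_finsetSum _ fun α _ => (contDiff_gradDot (m := 1) (contDiff_pi.1 h.contDiff_u α)
    (contDiff_pi.1 h.contDiff_u α)).continuous

theorem continuous_normSq_lapTensor (h : IsClassicalSolution τ R a b c L Γ ν Q u P) :
    Continuous (fun p => normSq (lapTensor Q p)) :=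
  continuous_finsetSum _ fun i _ =>
    (contDiff_lap (m := 1) (contDiff_entry h.contDiff_Q i)).continuous.pow 2

theorem supp_speedSq (h : IsClassicalSolution τ R a b c L Γ ν Q u P) :
    VanishesOutside (Icc 0 τ) R (fun p => ∑ α, u p α ^ 2) :=
  h.supp_u.map (φ := fun v => ∑ α, v α ^ 2) (by simp)

theorem supp_gradQsq (h : IsClassicalSolution τ R a b c L Γ ν Q u P) :
    VanishesOutside (Icc 0 τ) R (gradQsq Q) := by
  rw [gradQsq_eq_sum_gradDot]
  exact .sum fun i => (h.supp_entry i).gradDot _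

theorem supp_energyDensity (h : IsClassicalSolution τ R a b c L Γ ν Q u P) :
    VanishesOutside (Icc 0 τ) R (energyDensity L u Q) :=
  h.supp_speedSq.add (h.supp_gradQsq.mul_left fun _ => L)

theorem supp_gradVelocitySq (h : IsClassicalSolution τ R a b c L Γ ν Q u P) :
    VanishesOutside (Icc 0 τ) R (fun p => ∑ α, gradDot (fun q => u q α) (fun q => u q α) p) :=
  .sum fun α => (h.supp_u.map (φ := fun v => v α) rfl).gradDot _

theorem supp_normSq_lapTensor (h : IsClassicalSolution τ R a b c L Γ ν Q u P) :
    VanishesOutside (Icc 0 τ) R (fun p => normSq (lapTensor Q p)) :=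
  .sum fun i => (h.supp_entry i).lap.map (φ := fun y => y ^ 2) (by simp)

theorem integral_energyDensity (h : IsClassicalSolution τ R a b c L Γ ν Q u P)
    (hs : s ∈ Icc 0 τ) :
    ∫ x, energyDensity L u Q (s, x)
      = (∫ x, ∑ α, u (s, x) α ^ 2) + L * ∫ x, gradQsq Q (s, x) := by
  have hgrad := (contDiff_gradQsq (h.contDiff_Q.of_le (by norm_num))).continuous
  rw [← integral_const_mul]
  exact integral_add (h.supp_speedSq.integrable h.contDiff_speedSq.continuous hs)
    ((h.supp_gradQsq.integrable hgrad hs).const_mul L)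

theorem pt_energyDensity (h : IsClassicalSolution τ R a b c L Γ ν Q u P) (p : SpaceTime d) :
    pt (energyDensity L u Q) p = pt (fun q => ∑ α, u q α ^ 2) p + L * pt (gradQsq Q) p := by
  have hgrad := (contDiff_gradQsq (h.contDiff_Q.of_le (by norm_num))).differentiable one_ne_zero p
  have hspeed := h.contDiff_speedSq.differentiable one_ne_zero p
  exact congrArg (· ((1 : ℝ), (0 : Fin d → ℝ)))
    (hspeed.hasFDerivAt.add (hgrad.hasFDerivAt.const_mul L)).fderiv

theorem zeroMean_energy_balance (h : IsClassicalSolution τ R a b c L Γ ν Q u P) (hd : d ≤ 3)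
    (hs : s ∈ Icc 0 τ) :
    (fun x => pt (energyDensity L u Q) (s, x)
      + 2 * ν * ∑ α, gradDot (fun q => u q α) (fun q => u q α) (s, x)
      + 2 * Γ * L * ∑ i, lap (entry Q i) (s, x)
        * (L * lap (entry Q i) (s, x) + bulkField a b c (Q (s, x)) i)) ∈ zeroMean volume := by
  convert (zeroMean volume).add_mem (h.zeroMean_kinetic_balance hd hs)
    ((zeroMean volume).smul_mem L (h.zeroMean_elastic_balance hs)) using 1
  ext x
  simp only [Pi.add_apply, Pi.smul_apply, smul_eq_mul, h.pt_energyDensity]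
  ring

theorem integral_pt_energy_add_dissipation_le (h : IsClassicalSolution τ R a b c L Γ ν Q u P)
    (hd : d ≤ 3) (hΓ : 0 ≤ Γ) (hs : s ∈ Icc 0 τ) :
    (∫ x, pt (energyDensity L u Q) (s, x))
        + 2 * ν * (∫ x, ∑ α, gradDot (fun q => u q α) (fun q => u q α) (s, x))
        + Γ * L ^ 2 * (∫ x, normSq (lapTensor Q (s, x)))
      ≤ 3 * (a ^ 2 + b ^ 2 + c ^ 2) * Γ
        * ((∫ x, normSq (Q (s, x))) + ∫ x, normSq (Q (s, x)) ^ 3) := by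
  have hpt := (h.supp_energyDensity.pt (uniqueDiffOn_Icc h.pos)).integrable
    (contDiff_pt (m := 0) h.contDiff_energyDensity).continuous hs
  have hvisc := (h.supp_gradVelocitySq.integrable h.continuous_gradVelocitySq hs).const_mul (2 * ν)
  have hdiff :=
    (h.supp_normSq_lapTensor.integrable h.continuous_normSq_lapTensor hs).const_mul (Γ * L ^ 2)
  have hN := (contDiff_normSq h.contDiff_Q).continuous
  have hN1 := (h.supp_normSq_pow 0).integrable (hN.pow 1) hs
  have hN3 := (h.supp_normSq_pow 2).integrable (hN.pow 3) hs
  simp only [zero_add, pow_one] at hN1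
  rw [← integral_const_mul, ← integral_const_mul, ← integral_add hpt hvisc,
    ← integral_add (hpt.fun_add hvisc) hdiff, ← integral_add hN1 hN3, ← integral_const_mul]
  refine integral_le_of_le_add_zeroMean ((hpt.add hvisc).add hdiff) ((hN1.add hN3).const_mul _)
    (h.zeroMean_energy_balance hd hs) fun x => ?_
  have hbulk := mul_le_mul_of_nonneg_left (sum_bulkField_sq_le a b c (h.symm (s, x))) hΓ
  have habsorb : Γ * L ^ 2 * normSq (lapTensor Q (s, x)) ≤ 2 * Γ * L * ∑ i, lap (entry Q i) (s, x)
        * (L * lap (entry Q i) (s, x) + bulkField a b c (Q (s, x)) i)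
      + Γ * ∑ i, bulkField a b c (Q (s, x)) i ^ 2 := mul_sum_sq_le_add hΓ L _ _
  linear_combination hbulk + habsorb

theorem integral_normSq_add_le (h : IsClassicalSolution τ R a b c L Γ ν Q u P) (hc : 0 < c)
    (hL : 0 ≤ L) (hΓ : 0 ≤ Γ) (hs : s ∈ Icc 0 τ) :
    (∫ x, normSq (Q (s, x))) + ∫ x, normSq (Q (s, x)) ^ 3
      ≤ Real.exp (6 * Γ * (|a| + b ^ 2 / (4 * c)) * s)
        * ((∫ x, normSq (Q (0, x))) + ∫ x, normSq (Q (0, x)) ^ 3) := by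
  have hs0 := hs.1
  have hN0 : 0 ≤ ∫ x, normSq (Q (0, x)) := integral_nonneg fun x => normSq_nonneg _
  have hL2 : ∫ x, normSq (Q (s, x))
      ≤ Real.exp (2 * Γ * (|a| + b ^ 2 / (4 * c)) * s) * ∫ x, normSq (Q (0, x)) := by
    simpa using h.integral_normSq_pow_le hc hL hΓ hs 0
  have hL6 : ∫ x, normSq (Q (s, x)) ^ 3
      ≤ Real.exp (6 * Γ * (|a| + b ^ 2 / (4 * c)) * s) * ∫ x, normSq (Q (0, x)) ^ 3 := by
    convert h.integral_normSq_pow_le hc hL hΓ hs 2 using 6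
    norm_num
  have hexp : Real.exp (2 * Γ * (|a| + b ^ 2 / (4 * c)) * s)
      ≤ Real.exp (6 * Γ * (|a| + b ^ 2 / (4 * c)) * s) := by
    gcongr
    norm_num
  linear_combination hL2 + hL6 + mul_le_mul_of_nonneg_right hexp hN0

theorem integral_pt_energy_add_dissipation_le_exp
    (h : IsClassicalSolution τ R a b c L Γ ν Q u P) (hd : d ≤ 3) (hc : 0 < c) (hL : 0 ≤ L)
    (hΓ : 0 ≤ Γ) (hs : s ∈ Icc 0 t) (ht : t ≤ τ) :
    (∫ x, pt (energyDensity L u Q) (s, x))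
        + 2 * ν * (∫ x, ∑ α, gradDot (fun q => u q α) (fun q => u q α) (s, x))
        + Γ * L ^ 2 * (∫ x, normSq (lapTensor Q (s, x)))
      ≤ 3 * (a ^ 2 + b ^ 2 + c ^ 2) * Γ
        * (Real.exp (6 * Γ * (|a| + b ^ 2 / (4 * c)) * t)
          * ((∫ x, normSq (Q (0, x))) + ∫ x, normSq (Q (0, x)) ^ 3)) := by
  have hsτ : s ∈ Icc 0 τ := ⟨hs.1, hs.2.trans ht⟩
  have hI := integral_normSq_add_nonneg Q 0
  refine (h.integral_pt_energy_add_dissipation_le hd hΓ hsτ).trans ?_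
  gcongr
  refine (h.integral_normSq_add_le hc hL hΓ hsτ).trans ?_
  gcongr
  exact hs.2

theorem energy_add_dissipation_le (h : IsClassicalSolution τ R a b c L Γ ν Q u P)
    (hd : d ≤ 3) (hc : 0 < c) (hL : 0 ≤ L) (hΓ : 0 ≤ Γ) (ht : t ∈ Icc 0 τ) :
    (∫ x, energyDensity L u Q (t, x))
        + 2 * ν * (∫ s in 0..t, ∫ x, ∑ α, gradDot (fun q => u q α) (fun q => u q α) (s, x))
        + Γ * L ^ 2 * (∫ s in 0..t, ∫ x, normSq (lapTensor Q (s, x)))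
      ≤ (∫ x, energyDensity L u Q (0, x))
        + 3 * (a ^ 2 + b ^ 2 + c ^ 2) * Γ * (t * Real.exp (6 * Γ * (|a| + b ^ 2 / (4 * c)) * t))
          * ((∫ x, normSq (Q (0, x))) + ∫ x, normSq (Q (0, x)) ^ 3) := by
  have hpt := (h.supp_energyDensity.pt (uniqueDiffOn_Icc h.pos)).intervalIntegrable_integral
    (contDiff_pt (m := 0) h.contDiff_energyDensity).continuous ht
  have hvisc := (h.supp_gradVelocitySq.intervalIntegrable_integral
    h.continuous_gradVelocitySq ht).const_mul (2 * ν)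
  have hdiff := (h.supp_normSq_lapTensor.intervalIntegrable_integral
    h.continuous_normSq_lapTensor ht).const_mul (Γ * L ^ 2)
  have hint := intervalIntegral.integral_mono_on ht.1 ((hpt.add hvisc).add hdiff)
    intervalIntegrable_const fun s hs =>
      h.integral_pt_energy_add_dissipation_le_exp hd hc hL hΓ hs ht.2
  rw [intervalIntegral.integral_add (hpt.add hvisc) hdiff, intervalIntegral.integral_add hpt hvisc,
    intervalIntegral.integral_const_mul, intervalIntegral.integral_const_mul,
    intervalIntegral.integral_const, smul_eq_mul,
    ← integral_sub_integral_eq h.pos ht h.contDiff_energyDensity h.supp_energyDensity] at hint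
  linear_combination hint

theorem energy_estimate (h : IsClassicalSolution τ R a b c L Γ ν Q u P)
    (hd : d ≤ 3) (hc : 0 < c) (hL : 0 ≤ L) (hΓ : 0 ≤ Γ) (ht : t ∈ Icc 0 τ) :
    (∫ x, ∑ α, u (t, x) α ^ 2)
        + 2 * ν * (∫ s in 0..t, ∫ x, ∑ α, ∑ β, px β (fun q => u q α) (s, x) ^ 2)
        + L * (∫ x, gradQsq Q (t, x))
        + Γ * L ^ 2 * (∫ s in 0..t, ∫ x, ∑ α, ∑ β, lap (fun q => Q q α β) (s, x) ^ 2)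
      ≤ (∫ x, ∑ α, u (0, x) α ^ 2) + L * (∫ x, gradQsq Q (0, x))
        + energyConstant a b c Γ * Real.exp (energyConstant a b c Γ * t)
          * ((∫ x, trQ2 Q (0, x)) + ∫ x, trQ2 Q (0, x) ^ 3) := by
  have htr (x : Fin d → ℝ) : trQ2 Q (0, x) = normSq (Q (0, x)) := trQ2_eq_normSq (h.symm _)
  have hlap (s : ℝ) (x : Fin d → ℝ) : ∑ α, ∑ β, lap (fun q => Q q α β) (s, x) ^ 2
      = normSq (lapTensor Q (s, x)) := (Fintype.sum_prod_type' _).symm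
  have henergy := h.energy_add_dissipation_le hd hc hL hΓ ht
  rw [h.integral_energyDensity ht, h.integral_energyDensity (left_mem_Icc.2 h.pos.le)] at henergy
  have hI := integral_normSq_add_nonneg Q 0
  have hexp := mul_le_mul_of_nonneg_right (mul_mul_exp_le
    (by positivity : 0 ≤ 3 * (a ^ 2 + b ^ 2 + c ^ 2) * Γ)
    (by positivity : 0 ≤ 6 * Γ * (|a| + b ^ 2 / (4 * c))) ht.1) hI
  simp only [htr, hlap, energyConstant, sq (px _ _ _)]
  simp only [gradDot] at henergy
  linear_combination henergy + hexp

end IsClassicalSolution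

end ClassicalSolution

end BerisEdwards

theorem energy_apriori_estimate_general
    (d : ℕ) (hd : d ≤ 3) (a b c L Γ : ℝ) (hc : 0 < c) (hL : 0 ≤ L) (hΓ : 0 ≤ Γ) :
    ∃ C : ℝ, ∀ (T : ℝ≥0∞) (ν : ℝ)
        (Q : ℝ × (Fin d → ℝ) → Fin 3 → Fin 3 → ℝ)
        (u : ℝ × (Fin d → ℝ) → Fin d → ℝ)
        (P : ℝ × (Fin d → ℝ) → ℝ),
      ContDiff ℝ 3 Q → ContDiff ℝ 2 u → ContDiff ℝ 1 P →
      (∀ q α β, Q q α β = Q q β α) →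
      (∀ t₀ : ℝ, 0 ≤ t₀ → ENNReal.ofReal t₀ < T →
        ∃ R : ℝ, ∀ t : ℝ, ∀ x : Fin d → ℝ, 0 ≤ t → t ≤ t₀ → R ≤ ‖x‖ →
          Q (t, x) = 0 ∧ u (t, x) = 0) →
      (∀ t : ℝ, ∀ x : Fin d → ℝ, 0 ≤ t → ENNReal.ofReal t < T →
        QTensorEq L Γ a b c Q u (t, x) ∧ MomentumEq L ν Q u P (t, x) ∧ DivFree u (t, x)) →
      ∀ t : ℝ, 0 ≤ t → ENNReal.ofReal t < T →
        (∫ x : Fin d → ℝ, ∑ α : Fin d, (u (t, x) α) ^ 2)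
          + 2 * ν * (∫ s in (0:ℝ)..t, ∫ x : Fin d → ℝ,
              ∑ α : Fin d, ∑ β : Fin d, (px β (fun q => u q α) (s, x)) ^ 2)
          + L * (∫ x : Fin d → ℝ, gradQsq Q (t, x))
          + Γ * L ^ 2 * (∫ s in (0:ℝ)..t, ∫ x : Fin d → ℝ,
              ∑ α : Fin 3, ∑ β : Fin 3, (lap (fun q => Q q α β) (s, x)) ^ 2)
        ≤ (∫ x : Fin d → ℝ, ∑ α : Fin d, (u (0, x) α) ^ 2)
          + L * (∫ x : Fin d → ℝ, gradQsq Q (0, x))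
          + C * Real.exp (C * t) *
              ((∫ x : Fin d → ℝ, trQ2 Q (0, x)) + ∫ x : Fin d → ℝ, (trQ2 Q (0, x)) ^ 3) := by
  refine ⟨BerisEdwards.energyConstant a b c Γ,
    fun T ν Q u P hQ hu hP hsymm hsupp heqs t ht htT => ?_⟩
  obtain ⟨τ, hτ, htτ, hτT⟩ := ENNReal.lt_iff_exists_real_btwn.1 htT
  have htτ' : t < τ := (ENNReal.ofReal_lt_ofReal_iff_of_nonneg ht).1 htτ
  obtain ⟨R, hR⟩ := hsupp τ hτ hτT
  have hslab (s : ℝ) (hs : s ∈ Set.Icc 0 τ) (x : Fin d → ℝ) :=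
    heqs s x hs.1 ((ENNReal.ofReal_le_ofReal hs.2).trans_lt hτT)
  have hsol : BerisEdwards.IsClassicalSolution τ R a b c L Γ ν Q u P :=
    { pos := ht.trans_lt htτ'
      contDiff_Q := hQ
      contDiff_u := hu
      contDiff_P := hP
      symm := hsymm
      supp_Q := fun s hs x hx => (hR s x hs.1 hs.2 hx.le).1
      supp_u := fun s hs x hx => (hR s x hs.1 hs.2 hx.le).2
      tensorEq := fun s hs x => (hslab s hs x).1
      momentumEq := fun s hs x => (hslab s hs x).2.1
      divFree := fun s hs x => (hslab s hs x).2.2 }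
  exact hsol.energy_estimate hd hc hL hΓ ⟨ht, htτ'.le⟩

/-- The basic energy estimate for weak solutions: along smooth, uniformly compactly
supported solutions of the Beris–Edwards system on `[0,T) × ℝ^d` (`d ∈ {2,3}`, `c > 0`),
there is a constant `C = C(a,b,c,d,L,Γ)` with
`‖u(t)‖²_{L²} + 2ν∫₀ᵗ‖∇u‖²_{L²} + L‖∇Q(t)‖²_{L²} + ΓL²∫₀ᵗ‖ΔQ‖²_{L²}
  ≤ ‖u(0)‖²_{L²} + L‖∇Q(0)‖²_{L²} + Ce^{Ct}(‖Q(0)‖²_{L²} + ‖Q(0)‖⁶_{L⁶})`. -/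
theorem energy_apriori_estimate
    (d : ℕ) (hd : d = 2 ∨ d = 3) (a b c L Γ : ℝ) (hc : 0 < c) (hL : 0 < L) (hΓ : 0 < Γ) :
    ∃ C : ℝ, ∀ (T : ℝ≥0∞), 0 < T → ∀ (ν : ℝ), 0 < ν →
      ∀ (Q : ℝ × (Fin d → ℝ) → Fin 3 → Fin 3 → ℝ)
        (u : ℝ × (Fin d → ℝ) → Fin d → ℝ)
        (P : ℝ × (Fin d → ℝ) → ℝ),
      ContDiff ℝ (⊤ : ℕ∞) Q → ContDiff ℝ (⊤ : ℕ∞) u → ContDiff ℝ (⊤ : ℕ∞) P →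
      (∀ q α β, Q q α β = Q q β α) → (∀ q, ∑ α, Q q α α = 0) →
      (∀ t₀ : ℝ, 0 ≤ t₀ → ENNReal.ofReal t₀ < T →
        ∃ R : ℝ, ∀ t : ℝ, ∀ x : Fin d → ℝ, 0 ≤ t → t ≤ t₀ → R ≤ ‖x‖ →
          Q (t, x) = 0 ∧ u (t, x) = 0 ∧ P (t, x) = 0) →
      (∀ t : ℝ, ∀ x : Fin d → ℝ, 0 ≤ t → ENNReal.ofReal t < T →
        QTensorEq L Γ a b c Q u (t, x) ∧ MomentumEq L ν Q u P (t, x) ∧ DivFree u (t, x)) →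
      ∀ t : ℝ, 0 ≤ t → ENNReal.ofReal t < T →
        (∫ x : Fin d → ℝ, ∑ α : Fin d, (u (t, x) α) ^ 2)
          + 2 * ν * (∫ s in (0:ℝ)..t, ∫ x : Fin d → ℝ,
              ∑ α : Fin d, ∑ β : Fin d, (px β (fun q => u q α) (s, x)) ^ 2)
          + L * (∫ x : Fin d → ℝ, gradQsq Q (t, x))
          + Γ * L ^ 2 * (∫ s in (0:ℝ)..t, ∫ x : Fin d → ℝ,
              ∑ α : Fin 3, ∑ β : Fin 3, (lap (fun q => Q q α β) (s, x)) ^ 2)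
        ≤ (∫ x : Fin d → ℝ, ∑ α : Fin d, (u (0, x) α) ^ 2)
          + L * (∫ x : Fin d → ℝ, gradQsq Q (0, x))
          + C * Real.exp (C * t) *
              ((∫ x : Fin d → ℝ, trQ2 Q (0, x)) + ∫ x : Fin d → ℝ, (trQ2 Q (0, x)) ^ 3) := by
  obtain ⟨C, hC⟩ := energy_apriori_estimate_general d (by omega) a b c L Γ hc hL.le hΓ.le
  have hle (n : ℕ) : (n : WithTop ℕ∞) ≤ ((⊤ : ℕ∞) : WithTop ℕ∞) := WithTop.coe_le_coe.2 le_top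
  exact ⟨C, fun T _ ν _ Q u P hQ hu hP hsymm _ hsupp =>
    hC T ν Q u P (hQ.of_le (hle 3)) (hu.of_le (hle 2)) (hP.of_le (hle 1)) hsymm
      fun t₀ ht₀ hT => (hsupp t₀ ht₀ hT).imp fun R hR t x h0 h1 hx =>
        ⟨(hR t x h0 h1 hx).1, (hR t x h0 h1 hx).2.1⟩⟩
end
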